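/- Among connected graphs of the tetrahedral model with an odd number b of bubbles, the graphs maximizing the number of faces are exactly the double tadpoles decorated with melonic 2-point functions, and they satisfy F(G) = (3/2)(b−1) + 4 = (3/2)b + 5/2. -/

import Mathlib

/-!  A combinatorial model of the Feynman graphs of the rank-3 tetrahedral
(`O(N)^3`) tensor model.

A graph consists of a finite set `B` of bubbles (copies of the tetrahedron
`K_4`); each bubble has four vertices, so the vertex set is `B × Fin 4`.
Inside every bubble the edges of colors `1,2,3` are given once and for all by
the three fixed-point-free involutions of `Fin 4` (the proper 3-edge-coloring
of `K_4`).  The color-0 propagator edges, one per vertex, are encoded by a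
fixed-point-free involution `pairing` of the vertex set. -/

open Equiv

/-- The color-`c` (for `c ∈ {1,2,3}`, here `c : Fin 3`) perfect matching on the
four vertices of a tetrahedral bubble. -/
def bubblePerm : Fin 3 → Equiv.Perm (Fin 4) :=
  ![Equiv.swap 0 1 * Equiv.swap 2 3,
    Equiv.swap 0 2 * Equiv.swap 1 3,
    Equiv.swap 0 3 * Equiv.swap 1 2]

/-- A Feynman graph of the tetrahedral tensor model: a finite set of `K_4`
bubbles together with a fixed-point-free involution of the vertex set
describing the color-0 edges. -/
structure TGraph where
  B : Type
  [fintypeB : Fintype B]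
  [decB : DecidableEq B]
  pairing : Equiv.Perm (B × Fin 4)
  invol : ∀ v, pairing (pairing v) = v
  fixfree : ∀ v, pairing v ≠ v

attribute [instance] TGraph.fintypeB TGraph.decB

namespace TGraph

/-- The vertex set of a graph. -/
abbrev V (G : TGraph) : Type := G.B × Fin 4

/-- The permutation of the vertices given by the color-`c` edges inside the
bubbles. -/
def colPerm (G : TGraph) (c : Fin 3) : Equiv.Perm G.V :=
  (Equiv.refl G.B).prodCongr (bubblePerm c)

/-- The number of bubbles of a graph. -/
def b (G : TGraph) : ℕ := Fintype.card G.B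

/-- The subgroup of permutations of the vertices generated by the color-0
pairing and the color-`c` matching: its orbits are exactly the faces of
color `c` (cycles alternating colors `0` and `c`). -/
def faceGroup (G : TGraph) (c : Fin 3) : Subgroup (Equiv.Perm G.V) :=
  Subgroup.closure {G.pairing, G.colPerm c}

/-- Two vertices lie on the same face of color `c`. -/
def sameFace (G : TGraph) (c : Fin 3) (u v : G.V) : Prop :=
  u ∈ MulAction.orbit (G.faceGroup c) v

/-- The number of faces of color `c` of the graph. -/
noncomputable def numFaces (G : TGraph) (c : Fin 3) : ℕ :=
  Nat.card (MulAction.orbitRel.Quotient (G.faceGroup c) G.V)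

/-- The total number of faces of the graph. -/
noncomputable def F (G : TGraph) : ℕ := ∑ c : Fin 3, G.numFaces c

/-- The length of the face of color `c` through the vertex `v` (a face of
length `n` consists of `n` color-0 edges and `n` color-`c` edges, hence `2n`
vertices). -/
noncomputable def faceLength (G : TGraph) (c : Fin 3) (v : G.V) : ℕ :=
  Nat.card (MulAction.orbit (G.faceGroup c) v) / 2

/-- The subgroup generated by all edges of the graph. -/
def fullGroup (G : TGraph) : Subgroup (Equiv.Perm G.V) :=
  Subgroup.closure ({G.pairing} ∪ Set.range G.colPerm)

/-- A graph is connected if any vertex can be reached from any other one along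
its edges. -/
def Connected (G : TGraph) : Prop :=
  ∀ u v : G.V, u ∈ MulAction.orbit G.fullGroup v

/-- One step along an edge of the graph avoiding the color-0 edges whose
endpoints belong to `S`. -/
def stepAvoiding (G : TGraph) (S : Set G.V) (u v : G.V) : Prop :=
  (∃ c, v = G.colPerm c u) ∨ (v = G.pairing u ∧ u ∉ S ∧ v ∉ S)

/-- Reachability in the graph with the color-0 edges meeting `S` removed. -/
def reachAvoiding (G : TGraph) (S : Set G.V) : G.V → G.V → Prop :=
  Relation.ReflTransGen (G.stepAvoiding S)

/-- The pair of color-0 edges through the vertices `u` and `w` disconnects the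
graph when removed.  Together with the requirement that the two edges be
distinct, this is the notion of a 2-edge-cut of color-0 edges. -/
def CutDisconnects (G : TGraph) (u w : G.V) : Prop :=
  ¬ ∀ x y : G.V, G.reachAvoiding {u, G.pairing u, w, G.pairing w} x y

/-- Two vertices are connected by a 2-point function if they are joined by a
color-0 edge, or if their two (distinct) color-0 edges form a 2-edge-cut. -/
def TwoPoint (G : TGraph) (x y : G.V) : Prop :=
  G.pairing x = y ∨ (y ≠ x ∧ y ≠ G.pairing x ∧ G.CutDisconnects x y)

/-- The flip of the two color-0 edges `{u, pairing u}` and `{w, pairing w}`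
(assumed distinct) which reconnects `u` with `w` (and `pairing u` with
`pairing w`): the pairing is conjugated by the transposition exchanging
`pairing u` and `w`.  The other flip of this pair of edges is
`G.flip u (G.pairing w)`. -/
def flip (G : TGraph) (u w : G.V) : TGraph where
  B := G.B
  pairing := Equiv.swap (G.pairing u) w * G.pairing * Equiv.swap (G.pairing u) w
  invol := by
    intro v
    simp only [Equiv.Perm.mul_apply, Equiv.swap_apply_self, G.invol]
  fixfree := by
    intro v h
    simp only [Equiv.Perm.mul_apply] at h
    have h' : G.pairing (Equiv.swap (G.pairing u) w v) = Equiv.swap (G.pairing u) w v := by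
      have := congrArg (Equiv.swap (G.pairing u) w) h
      simpa using this
    exact G.fixfree _ h'

/-- The face of color `c` through the color-0 edge `{v, pairing v}` has
length 2 (it consists of this edge, a color-`c` edge, a second color-0 edge
and a second color-`c` edge closing the cycle). -/
def FaceLen2 (G : TGraph) (c : Fin 3) (v : G.V) : Prop :=
  G.pairing v ≠ G.colPerm c v ∧
    G.pairing (G.colPerm c (G.pairing v)) = G.colPerm c v

/-- A proper face of length 2 of color `c` through `v`: a face of length 2
whose two color-0 edges connect two distinct bubbles. -/
def ProperFace2 (G : TGraph) (c : Fin 3) (v : G.V) : Prop :=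
  G.FaceLen2 c v ∧ (G.pairing v).1 ≠ v.1

/-- A graph maximizes the number of faces if it is connected and no connected
graph with the same number of bubbles has more faces. -/
def MaximizesFaces (G : TGraph) : Prop :=
  G.Connected ∧ ∀ H : TGraph, H.Connected → H.b = G.b → H.F ≤ G.F

/-- Isomorphisms of graphs: bijections of the vertex sets commuting with the
color-0 pairing and with the colored matchings inside the bubbles. -/
structure Iso (G H : TGraph) where
  toEquiv : G.V ≃ H.V
  map_pairing : ∀ v, toEquiv (G.pairing v) = H.pairing (toEquiv v)
  map_col : ∀ c v, toEquiv (G.colPerm c v) = H.colPerm c (toEquiv v)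

/-- Two graphs are isomorphic. -/
def IsIso (G H : TGraph) : Prop := Nonempty (Iso G H)

end TGraph

open TGraph

/-- The leading-order two-bubble graph `G_2`: two tetrahedral bubbles with
corresponding vertices joined by four color-0 edges, so that all six faces
have length 2. -/
def G2 : TGraph where
  B := Fin 2
  pairing := (Equiv.swap (0 : Fin 2) 1).prodCongr (Equiv.refl (Fin 4))
  invol := by
    rintro ⟨i, k⟩
    simp [Equiv.prodCongr_apply, Equiv.swap_apply_self]
  fixfree := by
    rintro ⟨i, k⟩ h
    have hi : Equiv.swap (0 : Fin 2) 1 i = i := congrArg Prod.fst h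
    fin_cases i <;> simp_all

/-- The double tadpole `G_1^{(c)}`: one tetrahedral bubble whose two color-0
edges each join two vertices already adjacent by an edge of color `c`. -/
def G1 (c : Fin 3) : TGraph where
  B := Fin 1
  pairing := (Equiv.refl (Fin 1)).prodCongr (bubblePerm c)
  invol := by
    rintro ⟨i, k⟩
    have hk : ∀ j : Fin 4, bubblePerm c (bubblePerm c j) = j := by
      fin_cases c <;> decide
    simp [Equiv.prodCongr_apply, hk]
  fixfree := by
    rintro ⟨i, k⟩ h
    have hk : bubblePerm c k = k := congrArg Prod.snd h
    have hne : ∀ j : Fin 4, bubblePerm c j ≠ j := by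
      fin_cases c <;> decide
    exact hne k hk

namespace TGraph

variable (H K : TGraph)

/-- The image of a vertex of `H` in the glued graph. -/
def inlV (x : H.V) : (H.B ⊕ K.B) × Fin 4 := (Sum.inl x.1, x.2)

/-- The image of a vertex of `K` in the glued graph. -/
def inrV (y : K.V) : (H.B ⊕ K.B) × Fin 4 := (Sum.inr y.1, y.2)

/-- The underlying function of the pairing of the graph obtained by gluing `H`
and `K` along the color-0 edges `{p, H.pairing p}` and `{q, K.pairing q}`:
these two edges are cut and the half-edges are reglued as `p — q` and
`H.pairing p — K.pairing q`.  The new pair of edges is a 2-edge-cut of the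
resulting graph when `H` and `K` are connected. -/
def glueFun (p : H.V) (q : K.V) : (H.B ⊕ K.B) × Fin 4 → (H.B ⊕ K.B) × Fin 4 :=
  fun z =>
    match z with
    | (Sum.inl u, k) =>
        if (u, k) = p then inrV H K q
        else if (u, k) = H.pairing p then inrV H K (K.pairing q)
        else inlV H K (H.pairing (u, k))
    | (Sum.inr u, k) =>
        if (u, k) = q then inlV H K p
        else if (u, k) = K.pairing q then inlV H K (H.pairing p)
        else inrV H K (K.pairing (u, k))

theorem glueFun_inlV (p : H.V) (q : K.V) (x : H.V) :
    glueFun H K p q (inlV H K x) =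
      if x = p then inrV H K q
      else if x = H.pairing p then inrV H K (K.pairing q)
      else inlV H K (H.pairing x) := by
  cases x
  rfl

theorem glueFun_inrV (p : H.V) (q : K.V) (y : K.V) :
    glueFun H K p q (inrV H K y) =
      if y = q then inlV H K p
      else if y = K.pairing q then inlV H K (H.pairing p)
      else inrV H K (K.pairing y) := by
  cases y
  rfl

theorem inlV_injective : Function.Injective (inlV H K) := by
  rintro ⟨u, k⟩ ⟨u', k'⟩ h
  have h1 : (Sum.inl u : H.B ⊕ K.B) = Sum.inl u' := congrArg Prod.fst h
  have h2 : k = k' := congrArg Prod.snd h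
  exact Prod.ext (Sum.inl_injective h1) h2

theorem inrV_injective : Function.Injective (inrV H K) := by
  rintro ⟨u, k⟩ ⟨u', k'⟩ h
  have h1 : (Sum.inr u : H.B ⊕ K.B) = Sum.inr u' := congrArg Prod.fst h
  have h2 : k = k' := congrArg Prod.snd h
  exact Prod.ext (Sum.inr_injective h1) h2

theorem inlV_ne_inrV (x : H.V) (y : K.V) : inlV H K x ≠ inrV H K y := by
  intro h
  exact Sum.inl_ne_inr (congrArg Prod.fst h)

theorem glueFun_invol_inl (p : H.V) (q : K.V) (x : H.V) :
    glueFun H K p q (glueFun H K p q (inlV H K x)) = inlV H K x := by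
  rw [glueFun_inlV]
  by_cases h1 : x = p
  · rw [if_pos h1, glueFun_inrV, if_pos rfl, h1]
  · by_cases h2 : x = H.pairing p
    · rw [if_neg h1, if_pos h2, glueFun_inrV,
        if_neg (fun h => K.fixfree q h), if_pos rfl, h2]
    · have hne1 : H.pairing x ≠ p := by
        intro h; apply h2
        have := congrArg H.pairing h
        rw [H.invol] at this; exact this
      have hne2 : H.pairing x ≠ H.pairing p := fun h => h1 (H.pairing.injective h)
      rw [if_neg h1, if_neg h2, glueFun_inlV, if_neg hne1, if_neg hne2, H.invol]

theorem glueFun_invol_inr (p : H.V) (q : K.V) (y : K.V) :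
    glueFun H K p q (glueFun H K p q (inrV H K y)) = inrV H K y := by
  rw [glueFun_inrV]
  by_cases h1 : y = q
  · rw [if_pos h1, glueFun_inlV, if_pos rfl, h1]
  · by_cases h2 : y = K.pairing q
    · rw [if_neg h1, if_pos h2, glueFun_inlV,
        if_neg (fun h => H.fixfree p h), if_pos rfl, h2]
    · have hne1 : K.pairing y ≠ q := by
        intro h; apply h2
        have := congrArg K.pairing h
        rw [K.invol] at this; exact this
      have hne2 : K.pairing y ≠ K.pairing q := fun h => h1 (K.pairing.injective h)
      rw [if_neg h1, if_neg h2, glueFun_inrV, if_neg hne1, if_neg hne2, K.invol]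

theorem glueFun_involutive (p : H.V) (q : K.V) :
    Function.Involutive (glueFun H K p q) := by
  rintro ⟨(u | u), k⟩
  · exact glueFun_invol_inl H K p q (u, k)
  · exact glueFun_invol_inr H K p q (u, k)

theorem glueFun_fixfree (p : H.V) (q : K.V) :
    ∀ z, glueFun H K p q z ≠ z := by
  have hl : ∀ x : H.V, glueFun H K p q (inlV H K x) ≠ inlV H K x := by
    intro x h
    rw [glueFun_inlV] at h
    by_cases h1 : x = p
    · rw [if_pos h1] at h
      exact inlV_ne_inrV H K x q h.symm
    · by_cases h2 : x = H.pairing p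
      · rw [if_neg h1, if_pos h2] at h
        exact inlV_ne_inrV H K x (K.pairing q) h.symm
      · rw [if_neg h1, if_neg h2] at h
        exact H.fixfree x (inlV_injective H K h)
  have hr : ∀ y : K.V, glueFun H K p q (inrV H K y) ≠ inrV H K y := by
    intro y h
    rw [glueFun_inrV] at h
    by_cases h1 : y = q
    · rw [if_pos h1] at h
      exact inlV_ne_inrV H K p y h
    · by_cases h2 : y = K.pairing q
      · rw [if_neg h1, if_pos h2] at h
        exact inlV_ne_inrV H K (H.pairing p) y h
      · rw [if_neg h1, if_neg h2] at h
        exact K.fixfree y (inrV_injective H K h)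
  rintro ⟨(u | u), k⟩
  · exact hl (u, k)
  · exact hr (u, k)

/-- Gluing two graphs along a pair of color-0 edges.  When `H` and `K` are
connected, the two new color-0 edges form a 2-edge-cut of the glued graph, and
conversely every connected graph with a color-0 2-edge-cut arises this way
from the two closed graphs obtained by cutting the two edges and closing each
side. -/
def glue (p : H.V) (q : K.V) : TGraph where
  B := H.B ⊕ K.B
  pairing := (glueFun_involutive H K p q).toPerm
  invol := fun v => glueFun_involutive H K p q v
  fixfree := fun v => glueFun_fixfree H K p q v

/-- Insertion of a melonic dipole (the 2-point graph obtained by cutting one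
color-0 edge of `G_2`) on the color-0 edge `{v, G.pairing v}` of `G`. -/
def insertDipole (G : TGraph) (v : G.V) : TGraph :=
  glue G G2 v ((0 : Fin 2), (0 : Fin 4))

end TGraph

open TGraph

/-- Melonic graphs (up to isomorphism): `G_2` is melonic, and inserting a
melonic dipole on any color-0 edge of a melonic graph yields a melonic
graph. -/
inductive IsMelonic : TGraph → Prop
  | base {G : TGraph} (h : IsIso G G2) : IsMelonic G
  | insert {G : TGraph} (hG : IsMelonic G) (v : G.V) {H : TGraph}
      (h : IsIso H (G.insertDipole v)) : IsMelonic H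

/-- Double tadpoles decorated with melonic 2-point functions (up to
isomorphism): these are exactly the graphs obtained from one of the double
tadpoles `G_1^{(c)}` by repeatedly inserting melonic dipoles on color-0 edges,
i.e. double tadpoles whose two color-0 edges are replaced by melonic 2-point
functions. -/
inductive IsDecoratedTadpole : TGraph → Prop
  | base {G : TGraph} (c : Fin 3) (h : IsIso G (G1 c)) : IsDecoratedTadpole G
  | insert {G : TGraph} (hG : IsDecoratedTadpole G) (v : G.V) {H : TGraph}
      (h : IsIso H (G.insertDipole v)) : IsDecoratedTadpole H


section Invariants

variable {X : Type*}

/-- The `𝔽₂`-valued functions invariant under a permutation. -/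
def invariants (σ : Perm X) : Submodule (ZMod 2) (X → ZMod 2) where
  carrier := {f | ∀ x, f (σ x) = f x}
  add_mem' hf hg x := by simp [hf x, hg x]
  zero_mem' _ := rfl
  smul_mem' a f hf x := by simp [hf x]

theorem zmod_two_add_self (a : ZMod 2) : a + a = 0 := CharTwo.add_self_eq_zero a

/-- The orbits of the group generated by two permutations are counted by the invariant
functions. -/
theorem card_orbits_eq_finrank [Finite X] (σ τ : Perm X) :
    Nat.card (MulAction.orbitRel.Quotient (Subgroup.closure {σ, τ}) X) =
      Module.finrank (ZMod 2) ↥(invariants σ ⊓ invariants τ) := by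
  classical
  set Γ := Subgroup.closure {σ, τ} with hΓ
  have hinv : ∀ f ∈ invariants σ ⊓ invariants τ, ∀ g ∈ Γ, ∀ x, f (g x) = f x := by
    intro f hf g hg
    induction hg using Subgroup.closure_induction with
    | mem g hg =>
      rcases hg with rfl | rfl
      · exact hf.1
      · exact hf.2
    | one => intro x; rfl
    | mul a b _ _ ha hb => intro x; rw [Perm.mul_apply, ha, hb]
    | inv a _ ha => intro x; rw [← ha (a⁻¹ x)]; simp
  let e : ↥(invariants σ ⊓ invariants τ) ≃ₗ[ZMod 2]
      (MulAction.orbitRel.Quotient Γ X → ZMod 2) :=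
    { toFun := fun f q => Quotient.liftOn' q f.1 (by
        rintro a b ⟨g, rfl⟩
        exact hinv f.1 f.2 g.1 g.2 b)
      map_add' := fun f g => by
        ext q; induction q using Quotient.inductionOn'; rfl
      map_smul' := fun a f => by
        ext q; induction q using Quotient.inductionOn'; rfl
      invFun := fun f => ⟨fun x => f (Quotient.mk'' x), by
        constructor
        · intro x
          exact congrArg f (Quotient.sound' ⟨⟨σ, Subgroup.subset_closure (by simp)⟩, rfl⟩)
        · intro x
          exact congrArg f (Quotient.sound' ⟨⟨τ, Subgroup.subset_closure (by simp)⟩, rfl⟩)⟩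
      left_inv := fun f => rfl
      right_inv := fun f => by
        ext q; induction q using Quotient.inductionOn'; rfl }
  have : Finite (MulAction.orbitRel.Quotient Γ X) := Quotient.finite _
  have := Fintype.ofFinite (MulAction.orbitRel.Quotient Γ X)
  rw [e.finrank_eq, Module.finrank_fintype_fun_eq_card, Nat.card_eq_fintype_card]

theorem mul_zpow_conj {α β : Perm X} (hα : ∀ x, α (α x) = x) (hβ : ∀ x, β (β x) = x)
    (m : ℤ) (x : X) : α (((α * β) ^ m) x) = ((α * β) ^ (-m)) (α x) := by
  have hinvα : α⁻¹ = α := by ext x; rw [Perm.inv_eq_iff_eq, hα]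
  have hinvβ : β⁻¹ = β := by ext x; rw [Perm.inv_eq_iff_eq, hβ]
  have h : α * (α * β) * α⁻¹ = (α * β)⁻¹ := by
    rw [mul_inv_rev, hinvα, hinvβ]
    ext x; simp [hα]
  have h2 : α * (α * β) ^ m * α⁻¹ = (α * β) ^ (-m) := by
    rw [← conj_zpow, h, inv_zpow, zpow_neg]
  rw [← h2]
  simp

/-- Reflections of the dihedral group generated by two fixed-point-free involutions have no
fixed points. -/
theorem ne_mul_zpow_apply {α β : Perm X} (hα : ∀ x, α (α x) = x) (hβ : ∀ x, β (β x) = x)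
    (hα' : ∀ x, α x ≠ x) (hβ' : ∀ x, β x ≠ x) (m : ℤ) (x : X) :
    α x ≠ ((α * β) ^ m) x := by
  intro h
  obtain ⟨k, rfl | rfl⟩ := Int.even_or_odd' m
  · apply hα' (((α * β) ^ k) x)
    rw [mul_zpow_conj hα hβ, h, ← Perm.mul_apply, ← zpow_add]
    congr 2; ring
  · apply hβ' (((α * β) ^ k) x)
    apply α.injective
    rw [mul_zpow_conj hα hβ k x, h, ← Perm.mul_apply α β, ← Perm.mul_apply,
      ← Perm.mul_apply, ← zpow_one_add, ← zpow_add]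
    congr 2; ring

/-- The cycles alternating between two fixed-point-free involutions are even. -/
theorem exists_alternating {α β : Perm X} (hα : ∀ x, α (α x) = x) (hβ : ∀ x, β (β x) = x)
    (hα' : ∀ x, α x ≠ x) (hβ' : ∀ x, β x ≠ x) :
    ∃ s : X → ZMod 2, (∀ x, s (α x) = s x + 1) ∧ ∀ x, s (β x) = s x + 1 := by
  classical
  set p := α * β with hp
  have hconj : ∀ x y, p.SameCycle x y → p.SameCycle (α x) (α y) := by
    rintro x _ ⟨m, rfl⟩
    exact ⟨-m, (mul_zpow_conj hα hβ m x).symm⟩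
  have hno : ∀ x, ¬ p.SameCycle x (α x) := by
    rintro x ⟨m, h⟩
    exact ne_mul_zpow_apply hα hβ hα' hβ' m x h.symm
  let r : Setoid X :=
    { r := fun x y => p.SameCycle x y ∨ p.SameCycle x (α y)
      iseqv :=
        { refl := fun x => Or.inl (Perm.SameCycle.refl _ _)
          symm := by
            rintro x y (h | h)
            · exact Or.inl h.symm
            · right
              have := hconj _ _ h
              rw [hα] at this
              exact this.symm
          trans := by
            rintro x y z (h | h) (h' | h')
            · exact Or.inl (h.trans h')
            · exact Or.inr (h.trans h')
            · exact Or.inr (h.trans (hconj _ _ h'))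
            · have := hconj _ _ h'
              rw [hα] at this
              exact Or.inl (h.trans this) } }
  let c : X → X := fun x => (Quotient.mk r x).out
  have hc : ∀ x, p.SameCycle x (c x) ∨ p.SameCycle x (α (c x)) := fun x =>
    r.symm (Quotient.exact (Quotient.out_eq (Quotient.mk r x)))
  have hcα : ∀ x, c (α x) = c x := fun x =>
    congrArg Quotient.out (Quotient.sound (Or.inr (Perm.SameCycle.refl _ _)))
  have hcp : ∀ x, c (p x) = c x := fun x =>
    congrArg Quotient.out (Quotient.sound
      (Or.inl (Perm.sameCycle_apply_left.2 (Perm.SameCycle.refl _ _))))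
  have key : ∀ x, p.SameCycle (α x) (c x) ↔ ¬ p.SameCycle x (c x) := by
    intro x
    constructor
    · intro h h'
      exact hno x (h'.trans h.symm)
    · intro h
      have := hconj _ _ ((hc x).resolve_left h)
      rwa [hα] at this
  let s : X → ZMod 2 := fun x => if p.SameCycle x (c x) then 0 else 1
  have hsα : ∀ x, s (α x) = s x + 1 := by
    intro x
    simp only [s, hcα, key]
    by_cases h : p.SameCycle x (c x) <;> simp [h, zmod_two_add_self]
  have hsp : ∀ x, s (p x) = s x := by
    intro x
    simp only [s, hcp, Perm.sameCycle_apply_left]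
  refine ⟨s, hsα, fun x => ?_⟩
  have : β x = α (p x) := by rw [hp, Perm.mul_apply, hα]
  rw [this, hsα, hsp]

end Invariants

/-- The number of orbits of the group generated by two permutations. -/
noncomputable def orbitRank {X : Type*} (σ τ : Perm X) : ℕ :=
  Module.finrank (ZMod 2) ↥(invariants σ ⊓ invariants τ)

section Euler

variable {X : Type*} [Fintype X] [DecidableEq X]

theorem two_mul_finrank_invariants_le {α : Perm X} (hα : ∀ x, α (α x) = x)
    (hα' : ∀ x, α x ≠ x) :
    2 * Module.finrank (ZMod 2) ↥(invariants α) ≤ Fintype.card X := by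
  have h := Subspace.finrank_add_finrank_dualAnnihilator_eq (invariants α)
  rw [Module.finrank_fintype_fun_eq_card] at h
  have hle : (invariants α).map (dotProductEquiv (ZMod 2) X).toLinearMap ≤
      (invariants α).dualAnnihilator := by
    rintro _ ⟨f, hf, rfl⟩
    rw [Submodule.mem_dualAnnihilator]
    intro g hg
    change ∑ x, f x * g x = 0
    refine Finset.sum_involution (fun x _ => α x) ?_ ?_ ?_ ?_
    · intro x _
      rw [hf x, hg x, zmod_two_add_self]
    · intro x _ _; exact hα' x
    · intro x _; exact Finset.mem_univ _
    · intro x _; exact hα x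
  have h2 := Submodule.finrank_mono hle
  rw [LinearEquiv.finrank_map_eq] at h2
  omega

/-- The functionals vanishing on functions invariant under one of three involutions are
represented by functions invariant under all of them. -/
theorem card_le_finrank_sup_add_finrank_inf {α β γ : Perm X} (hα : ∀ x, α (α x) = x)
    (hβ : ∀ x, β (β x) = x) (hγ : ∀ x, γ (γ x) = x) (hα' : ∀ x, α x ≠ x)
    (hβ' : ∀ x, β x ≠ x) (hγ' : ∀ x, γ x ≠ x) :
    Fintype.card X ≤
      Module.finrank (ZMod 2) ↥(invariants α ⊔ invariants β ⊔ invariants γ) +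
        Module.finrank (ZMod 2) ↥(invariants α ⊓ invariants β ⊓ invariants γ) := by
  have h := Subspace.finrank_add_finrank_dualAnnihilator_eq
    (invariants α ⊔ invariants β ⊔ invariants γ)
  rw [Module.finrank_fintype_fun_eq_card] at h
  have single : ∀ σ : Perm X, (∀ x, σ (σ x) = x) → (∀ x, σ x ≠ x) → ∀ f : X → ZMod 2,
      dotProductEquiv (ZMod 2) X f ∈ (invariants σ).dualAnnihilator → f ∈ invariants σ := by
    intro σ hσ hσ' f hf x
    rw [Submodule.mem_dualAnnihilator] at hf
    have hmem : (Pi.single x 1 + Pi.single (σ x) 1 : X → ZMod 2) ∈ invariants σ := by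
      intro y
      have h1 : σ y = x ↔ y = σ x := by
        constructor
        · rintro rfl; rw [hσ]
        · rintro rfl; rw [hσ]
      simp only [Pi.add_apply, Pi.single_apply, h1, σ.injective.eq_iff]
      rw [add_comm]
    have h0 := hf _ hmem
    have h1 : f x + f (σ x) = 0 := by
      simpa [dotProductEquiv] using h0
    exact (CharTwo.add_eq_zero.1 h1).symm
  have hle : (invariants α ⊔ invariants β ⊔ invariants γ).dualAnnihilator ≤
      (invariants α ⊓ invariants β ⊓ invariants γ).map
        (dotProductEquiv (ZMod 2) X).toLinearMap := by
    intro φ hφ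
    obtain ⟨f, rfl⟩ := (dotProductEquiv (ZMod 2) X).surjective φ
    have hmono : ∀ {W : Submodule (ZMod 2) (X → ZMod 2)},
        W ≤ invariants α ⊔ invariants β ⊔ invariants γ →
        dotProductEquiv (ZMod 2) X f ∈ W.dualAnnihilator := fun hW =>
      Submodule.dualAnnihilator_anti hW hφ
    exact ⟨f, ⟨⟨single α hα hα' f (hmono (le_sup_left.trans le_sup_left)),
      single β hβ hβ' f (hmono (le_sup_right.trans le_sup_left))⟩,
      single γ hγ hγ' f (hmono le_sup_right)⟩, rfl⟩
  have h2 := Submodule.finrank_mono hle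
  rw [LinearEquiv.finrank_map_eq] at h2
  omega

/-- Euler characteristic bound for the surface triangulated by the orbits of three involutions,
together with the description of the equality case: the surface is then orientable. -/
theorem orbitRank_add_le_and_orientable {α β γ : Perm X} (hα : ∀ x, α (α x) = x)
    (hβ : ∀ x, β (β x) = x) (hγ : ∀ x, γ (γ x) = x) (hα' : ∀ x, α x ≠ x)
    (hβ' : ∀ x, β x ≠ x) (hγ' : ∀ x, γ x ≠ x) (C : ℕ)
    (hC : Module.finrank (ZMod 2) ↥(invariants α ⊓ invariants β ⊓ invariants γ) ≤ C) :
    2 * (orbitRank α β + orbitRank β γ + orbitRank γ α) ≤ Fintype.card X + 4 * C ∧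
    (Fintype.card X + 4 * C ≤ 2 * (orbitRank α β + orbitRank β γ + orbitRank γ α) →
      ∃ s : X → ZMod 2, (∀ x, s (α x) = s x + 1) ∧ (∀ x, s (β x) = s x + 1) ∧
        ∀ x, s (γ x) = s x + 1) := by
  unfold orbitRank
  have hA := two_mul_finrank_invariants_le hα hα'
  have hB := two_mul_finrank_invariants_le hβ hβ'
  have hC' := two_mul_finrank_invariants_le hγ hγ'
  have hS := card_le_finrank_sup_add_finrank_inf hα hβ hγ hα' hβ' hγ'
  obtain ⟨sαβ, hsα, hsβ⟩ := exists_alternating hα hβ hα' hβ'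
  obtain ⟨tβγ, htβ, htγ⟩ := exists_alternating hβ hγ hβ' hγ'
  obtain ⟨uγα, huγ, huα⟩ := exists_alternating hγ hα hγ' hα'
  rw [inf_comm (invariants γ) (invariants α)]
  set A := invariants α with hAdef
  set B := invariants β with hBdef
  set D := invariants γ with hDdef
  have e1 := Submodule.finrank_sup_add_finrank_inf_eq A B
  have e2 := Submodule.finrank_sup_add_finrank_inf_eq (A ⊔ B) D
  have e3 := Submodule.finrank_sup_add_finrank_inf_eq (A ⊓ D) (B ⊓ D)
  have hinf : A ⊓ D ⊓ (B ⊓ D) = A ⊓ B ⊓ D := inf_inf_distrib_right A B D |>.symm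
  rw [hinf] at e3
  have hle : A ⊓ D ⊔ B ⊓ D ≤ (A ⊔ B) ⊓ D :=
    sup_le (inf_le_inf_right _ le_sup_left) (inf_le_inf_right _ le_sup_right)
  have e4 := Submodule.finrank_mono hle
  refine ⟨by omega, fun heq => ?_⟩
  have hEq : A ⊓ D ⊔ B ⊓ D = (A ⊔ B) ⊓ D :=
    Submodule.eq_of_le_of_finrank_le hle (by omega)
  have hmem : uγα + tβγ ∈ (A ⊔ B) ⊓ D := by
    constructor
    · have : uγα + tβγ = (uγα + sαβ) + (sαβ + tβγ) := by
        ext x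
        simp only [Pi.add_apply]
        grind [zmod_two_add_self]
      rw [this]
      refine Submodule.add_mem_sup (fun x => ?_) (fun x => ?_)
      · simp only [Pi.add_apply, huα, hsα]
        rw [add_add_add_comm, zmod_two_add_self, add_zero]
      · simp only [Pi.add_apply, hsβ, htβ]
        rw [add_add_add_comm, zmod_two_add_self, add_zero]
    · intro x
      simp only [Pi.add_apply, huγ, htγ]
      rw [add_add_add_comm, zmod_two_add_self, add_zero]
  rw [← hEq, Submodule.mem_sup] at hmem
  obtain ⟨p, hp, q, hq, hpq⟩ := hmem
  have hsum : ∀ x, uγα x + p x = tβγ x + q x := by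
    intro x
    have h1 : p x + q x = uγα x + tβγ x := congrFun hpq x
    have h2 := congrArg (fun z => z + q x + uγα x) h1
    grind [zmod_two_add_self]
  refine ⟨uγα + p, fun x => ?_, fun x => ?_, fun x => ?_⟩
  · simp only [Pi.add_apply, huα, hp.1 x]; ring
  · simp only [Pi.add_apply, hsum, htβ, hq.1 x]; ring
  · simp only [Pi.add_apply, huγ, hp.2 x]; ring

end Euler

/-- If no cycle alternating between two fixed-point-free involutions has length less than `8`,
there are at most `|X| / 8` cycles. -/
theorem eight_mul_orbitRank_le {X : Type*} [Fintype X] {α β : Perm X} (hα : ∀ x, α (α x) = x)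
    (hβ : ∀ x, β (β x) = x) (hα' : ∀ x, α x ≠ x) (hβ' : ∀ x, β x ≠ x)
    (h : ∀ x, ∀ n : ℕ, 0 < n → n < 4 → ((α * β) ^ n) x ≠ x) :
    8 * orbitRank α β ≤ Fintype.card X := by
  classical
  set Γ := Subgroup.closure {α, β} with hΓ
  have hfin : Finite (MulAction.orbitRel.Quotient Γ X) := Quotient.finite _
  have hαΓ : α ∈ Γ := Subgroup.subset_closure (by simp)
  have hβΓ : β ∈ Γ := Subgroup.subset_closure (by simp)
  let g : Fin 4 × Bool → Γ := fun i =>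
    (if i.2 then ⟨α, hαΓ⟩ else 1) * ⟨α * β, Γ.mul_mem hαΓ hβΓ⟩ ^ (i.1 : ℕ)
  have hgf : ∀ (n : Fin 4) (x : X), g (n, false) • x = ((α * β) ^ (n : ℕ)) x := by
    intro n x
    simp [g, Subgroup.smul_def]
  have hgt : ∀ (n : Fin 4) (x : X), g (n, true) • x = α (((α * β) ^ (n : ℕ)) x) := by
    intro n x
    simp [g, Subgroup.smul_def, mul_smul]
  have hpow : ∀ (x : X) (m n : Fin 4),
      ((α * β) ^ (m : ℕ)) x = ((α * β) ^ (n : ℕ)) x → m = n := by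
    intro x
    have aux : ∀ m n : Fin 4, m < n → ((α * β) ^ (m : ℕ)) x ≠ ((α * β) ^ (n : ℕ)) x := by
      intro m n hmn he
      have hmn' : (m : ℕ) < n := hmn
      refine h x (n - m) (by omega) (by omega) (((α * β) ^ (m : ℕ)).injective ?_)
      rw [← Perm.mul_apply, ← pow_add, Nat.add_sub_cancel' hmn'.le, he]
    intro m n he
    rcases lt_trichotomy m n with hlt | heq | hlt
    · exact absurd he (aux m n hlt)
    · exact heq
    · exact absurd he.symm (aux n m hlt)
  have hmix : ∀ (x : X) (m n : Fin 4),
      α (((α * β) ^ (m : ℕ)) x) ≠ ((α * β) ^ (n : ℕ)) x := by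
    intro x m n he
    refine ne_mul_zpow_apply hα hβ hα' hβ' ((n : ℤ) - m) (((α * β) ^ (m : ℕ)) x) ?_
    rw [he, ← zpow_natCast, ← zpow_natCast, ← Perm.mul_apply, ← zpow_add, sub_add_cancel]
  let F : MulAction.orbitRel.Quotient Γ X × (Fin 4 × Bool) → X := fun q => g q.2 • q.1.out
  have hF : Function.Injective F := by
    rintro ⟨q, i⟩ ⟨q', i'⟩ he
    have hq : ∀ (q : MulAction.orbitRel.Quotient Γ X) i, (Quotient.mk'' (F (q, i)) :
        MulAction.orbitRel.Quotient Γ X) = q := by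
      intro q i
      conv_rhs => rw [← Quotient.out_eq' q]
      exact Quotient.sound' ⟨g i, rfl⟩
    have hqq : q = q' := by rw [← hq q i, ← hq q' i', he]
    subst hqq
    obtain ⟨m, _ | _⟩ := i <;> obtain ⟨n, _ | _⟩ := i' <;> simp only [F, hgf, hgt] at he
    · rw [hpow _ _ _ he]
    · exact absurd he.symm (hmix _ _ _)
    · exact absurd he (hmix _ _ _)
    · rw [hpow _ _ _ (α.injective he)]
  have hcard := Nat.card_le_card_of_injective F hF
  rw [Nat.card_prod, card_orbits_eq_finrank, Nat.card_eq_fintype_card,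
    Nat.card_eq_fintype_card] at hcard
  simp only [Fintype.card_prod, Fintype.card_fin, Fintype.card_bool] at hcard
  unfold orbitRank
  omega

namespace TGraph

theorem numFaces_eq_orbitRank (G : TGraph) (c : Fin 3) :
    G.numFaces c = orbitRank G.pairing (G.colPerm c) :=
  card_orbits_eq_finrank _ _

@[simp] theorem colPerm_fst (G : TGraph) (c : Fin 3) (v : G.V) : (G.colPerm c v).1 = v.1 := rfl

theorem colPerm_colPerm (G : TGraph) (c : Fin 3) (v : G.V) :
    G.colPerm c (G.colPerm c v) = v := by
  have h : ∀ c k, bubblePerm c (bubblePerm c k) = k := by decide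
  exact Prod.ext rfl (h c v.2)

theorem colPerm_ne (G : TGraph) (c : Fin 3) (v : G.V) : G.colPerm c v ≠ v := by
  have h : ∀ c k, bubblePerm c k ≠ k := by decide
  exact fun e => h c v.2 (congrArg Prod.snd e)

theorem colPerm_colPerm_of_ne (G : TGraph) {c d e : Fin 3} (hcd : c ≠ d) (hce : c ≠ e)
    (hde : d ≠ e) (v : G.V) : G.colPerm c (G.colPerm d v) = G.colPerm e v := by
  have h : ∀ c d e : Fin 3, c ≠ d → c ≠ e → d ≠ e → ∀ k,
      bubblePerm c (bubblePerm d k) = bubblePerm e k := by decide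
  exact Prod.ext rfl (h c d e hcd hce hde v.2)

theorem eq_or_exists_colPerm (G : TGraph) {v w : G.V} (h : w.1 = v.1) :
    w = v ∨ ∃ c, w = G.colPerm c v := by
  have key : ∀ k l : Fin 4, l = k ∨ ∃ c, l = bubblePerm c k := by decide
  rcases key v.2 w.2 with hk | ⟨c, hk⟩
  · exact Or.inl (Prod.ext h hk)
  · exact Or.inr ⟨c, Prod.ext h hk⟩

theorem colPerm_ne_colPerm (G : TGraph) {c d : Fin 3} (hcd : c ≠ d) (v : G.V) :
    G.colPerm c v ≠ G.colPerm d v := by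
  have h : ∀ c d : Fin 3, c ≠ d → ∀ k, bubblePerm c k ≠ bubblePerm d k := by decide
  exact fun e => h c d hcd v.2 (congrArg Prod.snd e)

theorem card_V (G : TGraph) : Fintype.card G.V = 4 * G.b := by
  rw [Fintype.card_prod, Fintype.card_fin, mul_comm]; rfl

theorem F_eq (G : TGraph) : G.F = G.numFaces 0 + G.numFaces 1 + G.numFaces 2 :=
  Fin.sum_univ_three _

theorem F_eq_of_ne (G : TGraph) {c d e : Fin 3} (hcd : c ≠ d) (hce : c ≠ e) (hde : d ≠ e) :
    G.F = G.numFaces c + G.numFaces d + G.numFaces e := by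
  rw [F_eq]
  fin_cases c <;> fin_cases d <;> fin_cases e <;> simp_all <;> omega

theorem pairing_eq_iff (G : TGraph) {x y : G.V} : G.pairing x = y ↔ x = G.pairing y := by
  constructor
  · rintro rfl; rw [G.invol]
  · rintro rfl; rw [G.invol]

/-- A set of bubbles is closed if no color-0 edge leaves it. -/
def BubbleClosed (G : TGraph) (P : G.B → Prop) : Prop :=
  ∀ v : G.V, P v.1 → P (G.pairing v).1

theorem BubbleClosed.not {G : TGraph} {P : G.B → Prop} (h : G.BubbleClosed P) :
    G.BubbleClosed (fun a => ¬ P a) := by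
  intro v hv hp
  have := h _ hp
  rw [G.invol] at this
  exact hv this

theorem connected_iff (G : TGraph) :
    G.Connected ↔ ∀ P : G.B → Prop, G.BubbleClosed P → ∀ a b, P a → P b := by
  constructor
  · intro hG P hP a b ha
    obtain ⟨⟨g, hg⟩, h⟩ := hG (b, 0) (a, 0)
    have key : ∀ v : G.V, P v.1 ↔ P (g v).1 := by
      clear h
      induction hg using Subgroup.closure_induction with
      | mem g hg =>
        rcases hg with rfl | ⟨c, rfl⟩
        · intro v
          refine ⟨hP v, fun h => ?_⟩
          have := hP _ h
          rwa [G.invol] at this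
        · intro v; rfl
      | one => intro v; rfl
      | mul a b _ _ ha hb => intro v; rw [hb, ha]; rfl
      | inv a _ ha => intro v; rw [ha (a⁻¹ v)]; simp
    have h' : g (a, 0) = (b, 0) := h
    have := (key (a, 0)).1 ha
    rwa [h'] at this
  · intro h u v
    have hstep : ∀ g ∈ G.fullGroup, ∀ w ∈ MulAction.orbit G.fullGroup v,
        g w ∈ MulAction.orbit G.fullGroup v := by
      rintro g hg _ ⟨k, rfl⟩
      exact ⟨⟨g, hg⟩ * k, rfl⟩
    have hcol : ∀ w w' : G.V, w'.1 = w.1 → w ∈ MulAction.orbit G.fullGroup v →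
        w' ∈ MulAction.orbit G.fullGroup v := by
      intro w w' hww hw
      rcases G.eq_or_exists_colPerm hww with rfl | ⟨c, rfl⟩
      · exact hw
      · exact hstep _ (Subgroup.subset_closure (Or.inr ⟨c, rfl⟩)) _ hw
    let P : G.B → Prop := fun a => ∃ k, ((a, k) : G.V) ∈ MulAction.orbit G.fullGroup v
    have hP : G.BubbleClosed P := by
      rintro w ⟨k, hk⟩
      exact ⟨(G.pairing w).2,
        hstep _ (Subgroup.subset_closure (Or.inl rfl)) _ (hcol (w.1, k) _ rfl hk)⟩
    obtain ⟨k, hk⟩ := h P hP v.1 u.1 ⟨v.2, MulAction.mem_orbit_self v⟩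
    exact hcol (u.1, k) _ rfl hk

theorem le_orbitRank_colPerm (G : TGraph) {c d : Fin 3} :
    G.b ≤ orbitRank (G.colPerm c) (G.colPerm d) := by
  let f : (G.B → ZMod 2) →ₗ[ZMod 2]
      ↥(invariants (G.colPerm c) ⊓ invariants (G.colPerm d)) :=
    { toFun := fun g => ⟨fun v => g v.1, fun _ => rfl, fun _ => rfl⟩
      map_add' := fun _ _ => rfl
      map_smul' := fun _ _ => rfl }
  have hf : Function.Injective f := by
    intro g g' h
    ext a
    exact congrFun (congrArg Subtype.val h) (a, 0)
  have := LinearMap.finrank_le_finrank_of_injective hf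
  rwa [Module.finrank_fintype_fun_eq_card] at this

theorem finrank_invariants_le_one {G : TGraph} (hG : G.Connected) {c d e : Fin 3}
    (hcd : c ≠ d) (hce : c ≠ e) (hde : d ≠ e) :
    Module.finrank (ZMod 2) ↥(invariants G.pairing ⊓ invariants (G.colPerm c) ⊓
      invariants (G.colPerm d)) ≤ 1 := by
  rw [connected_iff] at hG
  refine finrank_le_one ⟨fun _ => 1, ⟨fun _ => rfl, fun _ => rfl⟩, fun _ => rfl⟩ ?_
  rintro ⟨f, ⟨hf0, hfc⟩, hfd⟩
  have hfe : ∀ v, f (G.colPerm e v) = f v := by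
    intro v
    rw [← G.colPerm_colPerm_of_ne hcd hce hde, hfc, hfd]
  have hbub : ∀ v w : G.V, w.1 = v.1 → f w = f v := by
    intro v w h
    rcases G.eq_or_exists_colPerm h with rfl | ⟨x, rfl⟩
    · rfl
    · have : x = c ∨ x = d ∨ x = e := by omega
      rcases this with rfl | rfl | rfl
      · exact hfc v
      · exact hfd v
      · exact hfe v
  have hconst : ∀ v w : G.V, f v = f w := by
    intro v w
    have := hG (fun a => f (a, 0) = f v) (fun u hu => by
      change f ((G.pairing u).1, 0) = f v
      rw [hbub (G.pairing u) ((G.pairing u).1, 0) rfl, hf0 u, ← hbub u (u.1, 0) rfl]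
      exact hu) v.1 w.1
      (hbub v (v.1, 0) rfl)
    rw [← this]
    exact hbub w _ rfl
  rcases isEmpty_or_nonempty G.V with hV | ⟨⟨v⟩⟩
  · exact ⟨0, Subtype.ext (funext fun v => (hV.false v).elim)⟩
  · refine ⟨f v, Subtype.ext (funext fun w => ?_)⟩
    simp [hconst v w]

/-- The jacket of a connected graph containing the faces of two colors is a closed connected
surface. -/
theorem numFaces_add_numFaces_le {G : TGraph} (hG : G.Connected) {c d : Fin 3} (hcd : c ≠ d) :
    G.numFaces c + G.numFaces d ≤ G.b + 2 ∧ (G.b + 2 ≤ G.numFaces c + G.numFaces d →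
      ∃ s : G.V → ZMod 2, (∀ v, s (G.pairing v) = s v + 1) ∧
        (∀ v, s (G.colPerm c v) = s v + 1) ∧ ∀ v, s (G.colPerm d v) = s v + 1) := by
  obtain ⟨e, hce, hde⟩ : ∃ e, c ≠ e ∧ d ≠ e := by revert c d; decide
  have h := orbitRank_add_le_and_orientable G.invol (G.colPerm_colPerm c) (G.colPerm_colPerm d)
    G.fixfree (G.colPerm_ne c) (G.colPerm_ne d) 1 (finrank_invariants_le_one hG hcd hce hde)
  have hb := G.le_orbitRank_colPerm (c := c) (d := d)
  have hcomm : orbitRank (G.colPerm d) G.pairing = orbitRank G.pairing (G.colPerm d) := by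
    unfold orbitRank; rw [inf_comm]
  rw [hcomm, ← numFaces_eq_orbitRank, ← numFaces_eq_orbitRank, card_V] at h
  exact ⟨by omega, fun h' => h.2 (by omega)⟩

theorem two_mul_F_le {G : TGraph} (hG : G.Connected) : 2 * G.F ≤ 3 * G.b + 6 := by
  have h01 := (numFaces_add_numFaces_le hG (c := 0) (d := 1) (by decide)).1
  have h02 := (numFaces_add_numFaces_le hG (c := 0) (d := 2) (by decide)).1
  have h12 := (numFaces_add_numFaces_le hG (c := 1) (d := 2) (by decide)).1
  rw [F_eq]
  omega

/-- A connected graph with enough faces has a face of length two. -/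
theorem exists_faceLen2 {G : TGraph} (hG : G.Connected) (hF : 3 * G.b + 5 ≤ 2 * G.F) :
    ∃ c v, G.FaceLen2 c v := by
  have key : ∃ c d e : Fin 3, c ≠ d ∧ c ≠ e ∧ d ≠ e ∧ G.b + 2 ≤ G.numFaces d + G.numFaces e ∧
      G.b < 2 * G.numFaces c := by
    by_contra hno
    have h := fun c d e h1 h2 h3 h4 => not_lt.1 fun h5 => hno ⟨c, d, e, h1, h2, h3, h4, h5⟩
    have h0 := h 0 1 2 (by decide) (by decide) (by decide)
    have h1 := h 1 0 2 (by decide) (by decide) (by decide)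
    have h2 := h 2 0 1 (by decide) (by decide) (by decide)
    have h01 := (numFaces_add_numFaces_le hG (c := 0) (d := 1) (by decide)).1
    have h02 := (numFaces_add_numFaces_le hG (c := 0) (d := 2) (by decide)).1
    have h12 := (numFaces_add_numFaces_le hG (c := 1) (d := 2) (by decide)).1
    rw [F_eq] at hF
    omega
  obtain ⟨c, d, e, hcd, hce, hde, hplanar, hshort⟩ := key
  obtain ⟨s, hs0, hsd, hse⟩ := (numFaces_add_numFaces_le hG hde).2 hplanar
  have hsc : ∀ v, s (G.colPerm c v) = s v := by
    intro v
    rw [← G.colPerm_colPerm_of_ne hde hcd.symm hce.symm, hsd, hse, add_assoc,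
      zmod_two_add_self, add_zero]
  have hne : ∀ v, G.pairing v ≠ G.colPerm c v := by
    intro v h
    have := hs0 v
    rw [h, hsc] at this
    simp at this
  by_contra hno
  have hno2 : ∀ v, G.pairing (G.colPerm c (G.pairing v)) ≠ G.colPerm c v :=
    fun v h => hno ⟨c, v, hne v, h⟩
  have h8 := eight_mul_orbitRank_le G.invol (G.colPerm_colPerm c) G.fixfree (G.colPerm_ne c) (by
    have hs1 : ∀ v, s ((G.pairing * G.colPerm c) v) = s v + 1 := by
      intro v; rw [Perm.mul_apply, hs0, hsc]
    intro v n hn0 hn4 he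
    interval_cases n
    · have := hs1 v
      rw [← pow_one (G.pairing * G.colPerm c), he] at this
      simp at this
    · apply hno2 (G.colPerm c v)
      rw [G.colPerm_colPerm]
      simpa [pow_two] using he
    · have : s (((G.pairing * G.colPerm c) ^ 3) v) = s v + 1 := by
        rw [pow_succ, pow_two, Perm.mul_apply, Perm.mul_apply, hs1, hs1, hs1]
        grind [zmod_two_add_self]
      rw [he] at this
      simp at this)
  rw [← numFaces_eq_orbitRank, card_V] at h8
  omega

end TGraph

theorem finrank_le_finrank_add_one {K V : Type*} [Field K] [AddCommGroup V] [Module K V]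
    [FiniteDimensional K V] {A B : Submodule K V} (φ : V →ₗ[K] K)
    (h : A ⊓ LinearMap.ker φ ≤ B) : Module.finrank K A ≤ Module.finrank K B + 1 := by
  have h1 := Submodule.finrank_mono h
  have h2 := Submodule.finrank_sup_add_finrank_inf_eq A (LinearMap.ker φ)
  have h3 := Submodule.finrank_le (A ⊔ LinearMap.ker φ)
  have h4 := LinearMap.finrank_range_add_finrank_ker φ
  have h5 := Submodule.finrank_le (LinearMap.range φ)
  rw [Module.finrank_self] at h5
  omega

namespace TGraph

section Flip

variable (G : TGraph)

/-- The pairing of a flipped graph. -/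
def flipPerm (x y : G.V) : Perm G.V :=
  Equiv.swap (G.pairing x) y * G.pairing * Equiv.swap (G.pairing x) y

theorem flip_b (x y : G.V) : (G.flip x y).b = G.b := rfl

theorem flip_numFaces (x y : G.V) (c : Fin 3) :
    (G.flip x y).numFaces c = orbitRank (G.flipPerm x y) (G.colPerm c) :=
  numFaces_eq_orbitRank (G.flip x y) c

theorem flipPerm_flipPerm (x y v : G.V) : G.flipPerm x y (G.flipPerm x y v) = v :=
  (G.flip x y).invol v

variable {G} {x y : G.V}

theorem flipPerm_left (hyx : y ≠ x) : G.flipPerm x y x = y := by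
  simp only [flipPerm, Perm.mul_apply]
  rw [Equiv.swap_apply_of_ne_of_ne (G.fixfree x).symm hyx.symm, Equiv.swap_apply_left]

theorem flipPerm_right (hyx : y ≠ x) : G.flipPerm x y y = x := by
  have h := G.flipPerm_flipPerm x y x
  rwa [flipPerm_left hyx] at h

theorem flipPerm_pairing_left (hyx : y ≠ x) :
    G.flipPerm x y (G.pairing x) = G.pairing y := by
  simp only [flipPerm, Perm.mul_apply]
  rw [Equiv.swap_apply_left, Equiv.swap_apply_of_ne_of_ne (fun h => hyx (G.pairing.injective h))
    (G.fixfree y)]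

theorem flipPerm_pairing_right (hyx : y ≠ x) :
    G.flipPerm x y (G.pairing y) = G.pairing x := by
  rw [← flipPerm_pairing_left hyx]
  exact flipPerm_flipPerm _ _ _ _

theorem flipPerm_of_ne {v : G.V} (h1 : v ≠ x) (h2 : v ≠ y) (h3 : v ≠ G.pairing x)
    (h4 : v ≠ G.pairing y) : G.flipPerm x y v = G.pairing v := by
  simp only [flipPerm, Perm.mul_apply]
  rw [Equiv.swap_apply_of_ne_of_ne h3 h2, Equiv.swap_apply_of_ne_of_ne]
  · exact fun h => h1 (G.pairing.injective h)
  · exact fun h => h4 ((G.pairing_eq_iff).1 h)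

theorem mem_invariants_flipPerm (hyx : y ≠ x) {f : G.V → ZMod 2}
    (hf : f ∈ invariants G.pairing) (hxy : f x = f y) : f ∈ invariants (G.flipPerm x y) := by
  intro v
  by_cases h1 : v = x
  · rw [h1, flipPerm_left hyx, hxy]
  by_cases h2 : v = y
  · rw [h2, flipPerm_right hyx, hxy]
  by_cases h3 : v = G.pairing x
  · rw [h3, flipPerm_pairing_left hyx, hf, hf, hxy]
  by_cases h4 : v = G.pairing y
  · rw [h4, flipPerm_pairing_right hyx, hf, hf, hxy]
  rw [flipPerm_of_ne h1 h2 h3 h4, hf]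

/-- A flip merges at most two faces of a given color. -/
theorem numFaces_le_flip_add_one (hyx : y ≠ x) (c : Fin 3) :
    G.numFaces c ≤ (G.flip x y).numFaces c + 1 := by
  rw [flip_numFaces, numFaces_eq_orbitRank]
  let φ : (G.V → ZMod 2) →ₗ[ZMod 2] ZMod 2 :=
    { toFun := fun f => f x - f y
      map_add' := fun f g => add_sub_add_comm (f x) (g x) (f y) (g y)
      map_smul' := fun r f => (mul_sub r (f x) (f y)).symm }
  refine finrank_le_finrank_add_one φ ?_
  rintro f ⟨⟨hf0, hfc⟩, hfφ⟩
  exact ⟨mem_invariants_flipPerm hyx hf0 (sub_eq_zero.1 hfφ), hfc⟩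

/-- A flip along two edges lying on the same face of color `c` splits this face when it closes
a set of vertices containing `x` and not its partner. -/
theorem numFaces_add_one_le_flip (hyx : y ≠ x) {c : Fin 3} {s : G.V → ZMod 2}
    (hs : s ∈ invariants (G.flipPerm x y)) (hsc : s ∈ invariants (G.colPerm c))
    (hsx : s (G.pairing x) ≠ s x)
    (hxy : ∀ f ∈ invariants G.pairing, f ∈ invariants (G.colPerm c) → f x = f y) :
    G.numFaces c + 1 ≤ (G.flip x y).numFaces c := by
  rw [flip_numFaces, numFaces_eq_orbitRank]
  refine Submodule.finrank_lt_finrank_of_lt (lt_of_le_of_ne ?_ ?_)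
  · rintro f ⟨hf0, hfc⟩
    exact ⟨mem_invariants_flipPerm hyx hf0 (hxy f hf0 hfc), hfc⟩
  · intro h
    have hmem : s ∈ invariants (G.flipPerm x y) ⊓ invariants (G.colPerm c) := ⟨hs, hsc⟩
    rw [← h] at hmem
    exact hsx (hmem.1 x)

end Flip

section Restrict

variable (G : TGraph) (P : G.B → Prop) (hP : G.BubbleClosed P)

/-- The subgraph formed by a closed set of bubbles. -/
noncomputable def restrict : TGraph where
  B := {a // P a}
  fintypeB := Fintype.ofFinite _
  decB := Classical.decEq _
  pairing := Function.Involutive.toPerm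
    (fun v : {a // P a} × Fin 4 =>
      (⟨(G.pairing (v.1.1, v.2)).1, hP _ v.1.2⟩, (G.pairing (v.1.1, v.2)).2))
    (fun v => by
      have h := G.invol (v.1.1, v.2)
      exact Prod.ext (Subtype.ext (congrArg (fun z : G.V => z.1) h))
        (congrArg (fun z : G.V => z.2) h))
  invol v := by
    have h := G.invol (v.1.1, v.2)
    exact Prod.ext (Subtype.ext (congrArg (fun z : G.V => z.1) h))
      (congrArg (fun z : G.V => z.2) h)
  fixfree v h := by
    apply G.fixfree (v.1.1, v.2)
    exact Prod.ext (congrArg (fun z : {a // P a} × Fin 4 => z.1.1) h)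
      (congrArg (fun z : {a // P a} × Fin 4 => z.2) h)

variable {G P}

/-- The inclusion of the vertices of a subgraph. -/
def restrictVal (v : (G.restrict P hP).V) : G.V := (Subtype.val (p := P) v.1, v.2)

theorem restrictVal_prop (v : (G.restrict P hP).V) : P (restrictVal hP v).1 :=
  Subtype.prop (p := P) v.1

theorem restrictVal_injective : Function.Injective (restrictVal (G := G) hP) := fun _ _ h =>
  Prod.ext (Subtype.ext (congrArg (fun z : G.V => z.1) h))
      (congrArg (fun z : G.V => z.2) h)

/-- A vertex of the graph seen in the subgraph containing it. -/
def restrictMk (v : G.V) (hv : P v.1) : (G.restrict P hP).V := ((⟨v.1, hv⟩ : {a // P a}), v.2)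

theorem restrict_b_add :
    (G.restrict P hP).b + (G.restrict (fun a => ¬ P a) hP.not).b = G.b := by
  classical
  unfold b
  rw [← Nat.card_eq_fintype_card, ← Nat.card_eq_fintype_card, ← Nat.card_eq_fintype_card]
  have h := Nat.card_congr (Equiv.sumCompl P)
  rw [Nat.card_sum] at h
  exact h

theorem numFaces_le_restrict_add (c : Fin 3) :
    G.numFaces c ≤ (G.restrict P hP).numFaces c +
      (G.restrict (fun a => ¬ P a) hP.not).numFaces c := by
  simp only [numFaces_eq_orbitRank]
  let r : ∀ (Q : G.B → Prop) (hQ : G.BubbleClosed Q),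
      ↥(invariants G.pairing ⊓ invariants (G.colPerm c)) →ₗ[ZMod 2]
      ↥(invariants (G.restrict Q hQ).pairing ⊓ invariants ((G.restrict Q hQ).colPerm c)) :=
    fun Q hQ =>
    { toFun := fun f => ⟨fun v => f.1 (restrictVal hQ v),
        fun v => f.2.1 (restrictVal hQ v), fun v => f.2.2 (restrictVal hQ v)⟩
      map_add' := fun _ _ => rfl
      map_smul' := fun _ _ => rfl }
  have hinj : Function.Injective ((r P hP).prod (r _ hP.not)) := by
    intro f g h
    ext v
    by_cases hv : P v.1
    · exact congrFun (congrArg Subtype.val (congrArg Prod.fst h)) (restrictMk hP v hv)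
    · exact congrFun (congrArg Subtype.val (congrArg Prod.snd h)) (restrictMk hP.not v hv)
  have := LinearMap.finrank_le_finrank_of_injective hinj
  rwa [Module.finrank_prod] at this

theorem F_le_restrict_add :
    G.F ≤ (G.restrict P hP).F + (G.restrict (fun a => ¬ P a) hP.not).F := by
  simp only [F, ← Finset.sum_add_distrib]
  exact Finset.sum_le_sum fun c _ => numFaces_le_restrict_add hP c

end Restrict

section Cut

variable {G : TGraph} {x y : G.V}

/-- One side of a 2-edge-cut, closed by an edge joining its two half-edges, is connected. -/
theorem restrict_flip_connected (hG : G.Connected) {P : G.B → Prop}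
    (hP : (G.flip x y).BubbleClosed P) {z : G.V} (hz : P z.1) (hz1 : ¬ P (G.pairing z).1)
    (hz2 : ¬ P (G.pairing (G.flipPerm x y z)).1)
    (hoff : ∀ v : G.V, P v.1 → v ≠ z → v ≠ G.flipPerm x y z →
      G.flipPerm x y v = G.pairing v) :
    ((G.flip x y).restrict P hP).Connected := by
  rw [connected_iff] at hG ⊢
  intro T hT a a' ha
  let R : G.B → Prop := fun a => ∃ h : P a, T ⟨a, h⟩
  have hRP : ∀ v : G.V, R v.1 → R (G.flipPerm x y v).1 := by
    rintro v ⟨h, hv⟩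
    exact ⟨hP v h, hT (restrictMk hP v h) hv⟩
  have hsub : ∀ v : G.V, R v.1 → v ≠ z → v ≠ G.flipPerm x y z → R (G.pairing v).1 := by
    intro v hv h1 h2
    rw [← hoff v hv.1 h1 h2]
    exact hRP v hv
  by_cases hRz : R z.1
  · have hcl : G.BubbleClosed (fun a => R a ∨ ¬ P a) := by
      rintro v (hv | hv)
      · by_cases h1 : v = z
        · subst h1; exact Or.inr hz1
        by_cases h2 : v = G.flipPerm x y z
        · subst h2; exact Or.inr hz2
        exact Or.inl (hsub v hv h1 h2)
      · by_cases hPv : P (G.pairing v).1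
        · left
          by_cases h1 : G.pairing v = z
          · rwa [h1]
          by_cases h2 : G.pairing v = G.flipPerm x y z
          · rw [h2]; exact hRP z hRz
          have := hoff _ hPv h1 h2
          rw [G.invol] at this
          exact absurd (this ▸ hP _ hPv : P v.1) hv
        · exact Or.inr hPv
    rcases hG _ hcl _ a'.1 (Or.inl hRz) with h | h
    · exact h.2
    · exact absurd a'.2 h
  · have hcl : G.BubbleClosed R := by
      intro v hv
      refine hsub v hv (fun h => hRz (h ▸ hv)) (fun h => hRz ?_)
      have := hRP v hv
      rwa [h, flipPerm_flipPerm] at this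
    exact absurd (hG R hcl a.1 z.1 ⟨a.2, ha⟩) hRz

/-- The two sides of a 2-edge-cut: cutting the two edges and closing each side gives two
connected graphs, with three more faces in total. -/
theorem cut_properties (hG : G.Connected) (hyx : y ≠ x) (hy : y ≠ G.pairing x) {P : G.B → Prop}
    (hP : (G.flip x y).BubbleClosed P) (hPx : P x.1) (hPx' : ¬ P (G.pairing x).1) :
    ((G.flip x y).restrict P hP).Connected ∧
      ((G.flip x y).restrict (fun a => ¬ P a) hP.not).Connected ∧
      G.F + 3 ≤ ((G.flip x y).restrict P hP).F +
        ((G.flip x y).restrict (fun a => ¬ P a) hP.not).F := by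
  have hPf : ∀ v : G.V, P v.1 → P (G.flipPerm x y v).1 := hP
  have hPf' : ∀ v : G.V, ¬ P v.1 → ¬ P (G.flipPerm x y v).1 := hP.not
  have hPy : P y.1 := by rw [← flipPerm_left hyx]; exact hPf x hPx
  have hPy' : ¬ P (G.pairing y).1 := by
    rw [← flipPerm_pairing_left hyx]; exact hPf' _ hPx'
  refine ⟨?_, ?_, le_trans ?_ (F_le_restrict_add hP)⟩
  · refine restrict_flip_connected hG hP hPx hPx' ?_ ?_
    · rwa [flipPerm_left hyx]
    · intro v hv h1 h2
      rw [flipPerm_left hyx] at h2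
      exact flipPerm_of_ne h1 h2 (fun h => hPx' (h ▸ hv)) (fun h => hPy' (h ▸ hv))
  · refine restrict_flip_connected hG hP.not hPx' ?_ ?_ ?_
    · rw [G.invol]; exact not_not.2 hPx
    · rw [flipPerm_pairing_left hyx, G.invol]; exact not_not.2 hPy
    · intro v hv h1 h2
      rw [flipPerm_pairing_left hyx] at h2
      exact flipPerm_of_ne (fun h => hv (h ▸ hPx)) (fun h => hv (h ▸ hPy)) h1 h2
  · classical
    have hface : ∀ c, G.numFaces c + 1 ≤ (G.flip x y).numFaces c := by
      intro c
      refine numFaces_add_one_le_flip hyx (s := fun v => if P v.1 then 1 else 0) ?_ ?_ ?_ ?_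
      · intro v
        by_cases hv : P v.1
        · simp [hv, hPf v hv]
        · simp [hv, hPf' v hv]
      · intro v; rfl
      · simp [hPx, hPx']
      · intro f hf0 hfc
        by_contra hne
        let T : Finset G.V := Finset.univ.filter fun v => P v.1 ∧ f v = f x
        have hT : ∀ v, v ∈ T ↔ P v.1 ∧ f v = f x := by simp [T]
        have hxT : x ∈ T := (hT x).2 ⟨hPx, rfl⟩
        have h1 : ∑ v ∈ T, (1 : ZMod 2) = 0 := by
          refine Finset.sum_involution (fun v _ => G.colPerm c v) ?_ ?_ ?_ ?_
          · intro v _; exact zmod_two_add_self 1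
          · intro v _ _; exact G.colPerm_ne c v
          · intro v hv
            rw [hT] at hv ⊢
            exact ⟨hv.1, (hfc v).trans hv.2⟩
          · intro v _; exact G.colPerm_colPerm c v
        have h2 : ∑ v ∈ T.erase x, (1 : ZMod 2) = 0 := by
          refine Finset.sum_involution (fun v _ => G.pairing v) ?_ ?_ ?_ ?_
          · intro v _; exact zmod_two_add_self 1
          · intro v _ _; exact G.fixfree v
          · intro v hv
            rw [Finset.mem_erase, hT] at hv ⊢
            obtain ⟨hvx, hPv, hfv⟩ := hv
            have hvy : v ≠ y := by rintro rfl; exact hne hfv.symm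
            have hfl : G.flipPerm x y v = G.pairing v := flipPerm_of_ne hvx hvy
              (fun h => hPx' (h ▸ hPv)) (fun h => hPy' (h ▸ hPv))
            refine ⟨?_, ?_, (hf0 v).trans hfv⟩
            · intro h
              rw [G.pairing_eq_iff] at h
              exact hPx' (h ▸ hPv)
            · rw [← hfl]; exact hPf v hPv
          · intro v _; exact G.invol v
        rw [← Finset.add_sum_erase _ _ hxT, h2] at h1
        simp at h1
    rw [F_eq, F_eq]
    have h0 := hface 0
    have h1 := hface 1
    have h2 := hface 2
    omega

/-- If a flip disconnects a graph, some closed set of bubbles separates the two new edges. -/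
theorem exists_cut (hG : G.Connected) (hyx : y ≠ x) (hcut : ¬ (G.flip x y).Connected) :
    ∃ P : G.B → Prop, (G.flip x y).BubbleClosed P ∧ P x.1 ∧ ¬ P (G.pairing x).1 := by
  rw [connected_iff] at hG hcut
  push Not at hcut
  obtain ⟨P₀, hP₀, a₀, b₀, ha₀, hb₀⟩ := hcut
  obtain ⟨P, hP, hPx, a, b, ha, hb⟩ : ∃ P : G.B → Prop, (G.flip x y).BubbleClosed P ∧ P x.1 ∧
      ∃ a b, P a ∧ ¬ P b := by
    by_cases h : P₀ x.1
    · exact ⟨P₀, hP₀, h, a₀, b₀, ha₀, hb₀⟩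
    · exact ⟨_, hP₀.not, h, b₀, a₀, hb₀, not_not.2 ha₀⟩
  refine ⟨P, hP, hPx, fun hPx' => hb (hG P ?_ a b ha)⟩
  have hPf : ∀ v : G.V, P v.1 → P (G.flipPerm x y v).1 := hP
  intro v hv
  by_cases h1 : v = x
  · rwa [h1]
  by_cases h2 : v = y
  · rw [h2, ← flipPerm_pairing_left hyx]; exact hPf _ hPx'
  by_cases h3 : v = G.pairing x
  · rwa [h3, G.invol]
  by_cases h4 : v = G.pairing y
  · rw [h4, G.invol, ← flipPerm_left hyx]; exact hPf _ hPx
  rw [← flipPerm_of_ne h1 h2 h3 h4]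
  exact hPf v hv

end Cut

end TGraph

namespace TGraph

section Melon

variable {G : TGraph}

theorem ne_of_fst_ne {a b : G.V} (h : a.1 ≠ b.1) : a ≠ b :=
  fun e => h (congrArg (fun z : G.V => z.1) e)

/-- The bubbles of `v` and `w` form a melonic dipole with external half-edges at `v` and `w`. -/
def Melon (G : TGraph) (v w : G.V) : Prop :=
  v.1 ≠ w.1 ∧ ∀ c, G.pairing (G.colPerm c v) = G.colPerm c w

/-- The vertex `p` is not an endpoint of an internal color-0 edge of the dipole at `v`, `w`. -/
def AvoidsInternal (G : TGraph) (p v w : G.V) : Prop :=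
  ∀ c, p ≠ G.colPerm c v ∧ p ≠ G.colPerm c w

/-- Flipping two edges which are neighbours, along color `d`, of the two ends of a third edge
creates a face of color `d` of length two. -/
theorem numFaces_add_one_le_flip_of_edge (m : G.V) (d : Fin 3)
    (h : G.pairing (G.colPerm d m) ≠ G.colPerm d (G.pairing m)) :
    G.numFaces d + 1 ≤
      (G.flip (G.colPerm d m) (G.colPerm d (G.pairing m))).numFaces d := by
  classical
  set x := G.colPerm d m with hx
  set y := G.colPerm d (G.pairing m) with hy
  have hxm : G.colPerm d x = m := G.colPerm_colPerm d m
  have hym : G.colPerm d y = G.pairing m := G.colPerm_colPerm d _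
  have hmx : m ≠ x := (G.colPerm_ne d m).symm
  have hmy : G.pairing m ≠ y := (G.colPerm_ne d _).symm
  have hyx : y ≠ x := fun e => G.fixfree m ((G.colPerm d).injective e)
  have hxw : x ≠ G.pairing m := by
    intro e
    apply h
    rw [e, G.invol, hy, ← e, hxm]
  have hyv : y ≠ m := by
    intro e
    apply hxw
    rw [← hym, e]
  have hpx : G.pairing x ≠ m := fun e => hxw (G.pairing_eq_iff.1 e)
  have hpy : G.pairing y ≠ m := fun e => hmy (G.pairing_eq_iff.1 e).symm
  have hpx' : G.pairing x ≠ G.pairing m := fun e => hmx (G.pairing.injective e).symm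
  have hpy' : G.pairing y ≠ G.pairing m := fun e => hyv (G.pairing.injective e)
  have hpyx : G.pairing y ≠ x := fun e => h (G.pairing_eq_iff.1 e).symm
  refine numFaces_add_one_le_flip hyx
    (s := fun v => if v = x ∨ v = m ∨ v = G.pairing m ∨ v = y then 1 else 0) ?_ ?_ ?_ ?_
  · intro v
    by_cases h1 : v = x
    · simp [h1, flipPerm_left hyx]
    by_cases h2 : v = y
    · simp [h2, flipPerm_right hyx]
    by_cases h3 : v = G.pairing x
    · simp [h3, flipPerm_pairing_left hyx, hpx, hpy, hpx', hpy', G.fixfree, hpyx, h]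
    by_cases h4 : v = G.pairing y
    · simp [h4, flipPerm_pairing_right hyx, hpx, hpy, hpx', hpy', G.fixfree, hpyx, h]
    rw [flipPerm_of_ne h1 h2 h3 h4]
    have e1 : G.pairing v ≠ x := fun e => h3 (G.pairing_eq_iff.1 e)
    have e2 : G.pairing v ≠ y := fun e => h4 (G.pairing_eq_iff.1 e)
    simp [h1, h2, e1, e2, G.pairing_eq_iff, G.invol, or_comm]
  · intro v
    have key : ∀ a b, G.colPerm d a = b → (G.colPerm d v = b ↔ v = a) := by
      rintro a _ rfl
      exact (G.colPerm d).injective.eq_iff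
    have k1 := key x m hxm
    have k2 := key y _ hym
    have k3 := key m x rfl
    have k4 := key _ y rfl
    simp only [k1, k2, k3, k4]
    congr 1
    grind
  · simp [hpx, hpx', G.fixfree, h]
  · intro f hf0 hfc
    rw [hx, hy, hfc, hfc, hf0]

theorem b_eq_one_of_pairing_fst {G : TGraph} (hG : G.Connected) (v : G.V)
    (h : ∀ w : G.V, w.1 = v.1 → (G.pairing w).1 = v.1) : G.b = 1 := by
  rw [connected_iff] at hG
  exact Fintype.card_eq_one_iff.2 ⟨v.1, fun a => hG (fun a => a = v.1) h v.1 a rfl⟩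

/-- A connected graph with enough faces in which no flip is disconnecting contains a dipole. -/
theorem exists_melon_of_forall_flip_connected (hG : G.Connected) (hF : 3 * G.b + 5 ≤ 2 * G.F)
    (hb : G.b ≠ 1) (hflip : ∀ x y, y ≠ x → y ≠ G.pairing x → (G.flip x y).Connected) (p : G.V) :
    ∃ v w, G.Melon v w ∧ G.AvoidsInternal p v w := by
  obtain ⟨c, v, hv, hc⟩ := exists_faceLen2 hG hF
  have hc' : G.pairing (G.colPerm c v) = G.colPerm c (G.pairing v) := by
    rw [← hc, G.invol]
  have hfst : v.1 ≠ (G.pairing v).1 := by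
    intro h
    rcases G.eq_or_exists_colPerm h.symm with h | ⟨d, h⟩
    · exact G.fixfree v h
    have hcd : c ≠ d := by rintro rfl; exact hv h
    refine hb (b_eq_one_of_pairing_fst hG v fun w hw => ?_)
    rcases G.eq_or_exists_colPerm hw with rfl | ⟨e, rfl⟩
    · rw [h]; rfl
    by_cases hec : e = c
    · rw [hec, hc', h]; rfl
    by_cases hed : e = d
    · rw [hed, ← h, G.invol]
    · rw [← G.colPerm_colPerm_of_ne hcd (Ne.symm hec) (Ne.symm hed), ← h, hc]; rfl
  have hall : ∀ d, G.pairing (G.colPerm d v) = G.colPerm d (G.pairing v) := by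
    intro d
    by_cases hdc : d = c
    · rw [hdc, hc']
    by_contra hd
    obtain ⟨e, hce, hde⟩ : ∃ e, c ≠ e ∧ d ≠ e := by clear * -; revert c d; decide
    have hed : ∀ u, G.colPerm e (G.colPerm c u) = G.colPerm d u :=
      G.colPerm_colPerm_of_ne hce.symm hde.symm (Ne.symm hdc)
    have hyx : G.colPerm d (G.pairing v) ≠ G.colPerm d v :=
      fun h => hfst (congrArg (fun z : G.V => z.1) h).symm
    have hcon := hflip _ _ hyx (Ne.symm hd)
    have hFd := numFaces_add_one_le_flip_of_edge v d hd
    have hFe := numFaces_add_one_le_flip_of_edge (G.colPerm c v) e (by rwa [hc', hed, hed])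
    rw [hc', hed, hed] at hFe
    have hFc := numFaces_le_flip_add_one hyx c
    have hle := two_mul_F_le hcon
    rw [F_eq_of_ne _ (Ne.symm hdc) hce hde, flip_b] at hle
    rw [F_eq_of_ne _ (Ne.symm hdc) hce hde] at hF
    omega
  by_cases hp : G.AvoidsInternal p v (G.pairing v)
  · exact ⟨v, _, ⟨hfst, hall⟩, hp⟩
  · simp only [AvoidsInternal, not_forall] at hp
    obtain ⟨d, hd⟩ := hp
    refine ⟨G.colPerm d v, G.colPerm d (G.pairing v), ⟨hfst, fun e => ?_⟩, fun e => ?_⟩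
    · by_cases hed : e = d
      · rw [hed, G.colPerm_colPerm, G.colPerm_colPerm]
      obtain ⟨f, hef, hdf⟩ : ∃ f, e ≠ f ∧ d ≠ f := by clear * -; revert e d; decide
      rw [G.colPerm_colPerm_of_ne hed hef hdf, G.colPerm_colPerm_of_ne hed hef hdf, hall]
    · rw [not_and_or, not_not, not_not] at hd
      rcases hd with rfl | rfl
      · exact ⟨(G.colPerm_ne e _).symm, ne_of_fst_ne hfst⟩
      · exact ⟨ne_of_fst_ne hfst.symm, (G.colPerm_ne e _).symm⟩

theorem Melon.of_restrict_flip {x y : G.V} {P : G.B → Prop}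
    {hP : (G.flip x y).BubbleClosed P} {z : G.V} (hz : P z.1)
    (hoff : ∀ v : G.V, P v.1 → v ≠ z → v ≠ G.flipPerm x y z →
      G.flipPerm x y v = G.pairing v) {v w : ((G.flip x y).restrict P hP).V}
    (hm : ((G.flip x y).restrict P hP).Melon v w)
    (hav : ((G.flip x y).restrict P hP).AvoidsInternal (restrictMk hP z hz) v w) :
    G.Melon (restrictVal (G := G.flip x y) hP v) (restrictVal (G := G.flip x y) hP w) := by
  refine ⟨fun h => hm.1 (Subtype.ext h), fun c => ?_⟩
  have hp : G.flipPerm x y (G.colPerm c (restrictVal (G := G.flip x y) hP v)) =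
      G.colPerm c (restrictVal (G := G.flip x y) hP w) :=
    congrArg (restrictVal hP) (hm.2 c)
  refine (hoff (G.colPerm c (restrictVal (G := G.flip x y) hP v))
    (restrictVal_prop hP v) ?_ ?_).symm.trans hp
  · exact fun h => (hav c).1 (restrictVal_injective hP h.symm)
  · intro h
    rw [h, flipPerm_flipPerm] at hp
    exact (hav c).2 (restrictVal_injective hP hp)

theorem flipPerm_of_closed {x y : G.V} {P : G.B → Prop} (hyx : y ≠ x)
    (hP : (G.flip x y).BubbleClosed P) (hPx' : ¬ P (G.pairing x).1) {v : G.V} (hv : P v.1)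
    (h1 : v ≠ x) (h2 : v ≠ G.flipPerm x y x) : G.flipPerm x y v = G.pairing v := by
  have hPy' : ¬ P (G.flipPerm x y (G.pairing x)).1 := hP.not _ hPx'
  rw [flipPerm_pairing_left hyx] at hPy'
  rw [flipPerm_left hyx] at h2
  exact flipPerm_of_ne h1 h2 (fun h => hPx' (h ▸ hv)) (fun h => hPy' (h ▸ hv))

theorem flipPerm_of_closed_not {x y : G.V} {P : G.B → Prop} (hyx : y ≠ x)
    (hP : (G.flip x y).BubbleClosed P) (hPx : P x.1) {v : G.V} (hv : ¬ P v.1)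
    (h1 : v ≠ G.pairing x) (h2 : v ≠ G.flipPerm x y (G.pairing x)) :
    G.flipPerm x y v = G.pairing v := by
  have hPy : P (G.flipPerm x y x).1 := hP _ hPx
  rw [flipPerm_left hyx] at hPy
  rw [flipPerm_pairing_left hyx] at h2
  exact flipPerm_of_ne (fun h => hv (h ▸ hPx)) (fun h => hv (h ▸ hPy)) h1 h2

theorem b_pos (v : G.V) : 0 < G.b := Fintype.card_pos_iff.2 ⟨v.1⟩

/-- A connected graph with the maximal number of faces contains a dipole whose internal edges
avoid any given vertex. -/
theorem exists_melon_avoiding (hG : G.Connected) (hF : 3 * G.b + 6 ≤ 2 * G.F) (p : G.V) :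
    ∃ v w, G.Melon v w ∧ G.AvoidsInternal p v w := by
  induction hn : G.b using Nat.strong_induction_on generalizing G with
  | _ n ih =>
  subst hn
  by_cases hflip : ∀ x y, y ≠ x → y ≠ G.pairing x → (G.flip x y).Connected
  · have := two_mul_F_le hG
    exact exists_melon_of_forall_flip_connected hG (by omega) (by omega) hflip p
  push Not at hflip
  obtain ⟨x, y, hyx, hy, hcut⟩ := hflip
  obtain ⟨P, hP, hPx, hPx'⟩ := exists_cut hG hyx hcut
  obtain ⟨hH, hK, hFHK⟩ := cut_properties hG hyx hy hP hPx hPx'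
  have hb := restrict_b_add hP
  have hbH := b_pos (restrictMk hP x hPx)
  have hbK := b_pos (restrictMk hP.not (G.pairing x) hPx')
  have hFH := two_mul_F_le hH
  have hFK := two_mul_F_le hK
  rw [flip_b] at hb
  by_cases hp : P p.1
  · obtain ⟨v, w, hm, hav⟩ := ih _ (by omega) hK (by omega)
      (restrictMk hP.not (G.pairing x) hPx') rfl
    refine ⟨_, _, hm.of_restrict_flip hPx'
      (fun _ => flipPerm_of_closed_not hyx hP hPx) hav, fun c => ⟨?_, ?_⟩⟩
    · rintro rfl; exact restrictVal_prop hP.not v hp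
    · rintro rfl; exact restrictVal_prop hP.not w hp
  · obtain ⟨v, w, hm, hav⟩ := ih _ (by omega) hH (by omega) (restrictMk hP x hPx) rfl
    refine ⟨_, _, hm.of_restrict_flip hPx
      (fun _ => flipPerm_of_closed hyx hP hPx') hav, fun c => ⟨?_, ?_⟩⟩
    · rintro rfl; exact hp (restrictVal_prop hP v)
    · rintro rfl; exact hp (restrictVal_prop hP w)

theorem exists_melon (hG : G.Connected) (hF : 3 * G.b + 5 ≤ 2 * G.F) (hb : G.b ≠ 1) (p : G.V) :
    ∃ v w, G.Melon v w := by
  by_cases hflip : ∀ x y, y ≠ x → y ≠ G.pairing x → (G.flip x y).Connected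
  · obtain ⟨v, w, h, -⟩ := exists_melon_of_forall_flip_connected hG hF hb hflip p
    exact ⟨v, w, h⟩
  push Not at hflip
  obtain ⟨x, y, hyx, hy, hcut⟩ := hflip
  obtain ⟨P, hP, hPx, hPx'⟩ := exists_cut hG hyx hcut
  obtain ⟨hH, hK, hFHK⟩ := cut_properties hG hyx hy hP hPx hPx'
  have hb := restrict_b_add hP
  have hFH := two_mul_F_le hH
  have hFK := two_mul_F_le hK
  rw [flip_b] at hb
  by_cases hcase : 3 * ((G.flip x y).restrict P hP).b + 6 ≤ 2 * ((G.flip x y).restrict P hP).F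
  · obtain ⟨v, w, hm, hav⟩ := exists_melon_avoiding hH hcase (restrictMk hP x hPx)
    exact ⟨_, _, hm.of_restrict_flip hPx (fun _ => flipPerm_of_closed hyx hP hPx') hav⟩
  · obtain ⟨v, w, hm, hav⟩ := exists_melon_avoiding hK (by omega)
      (restrictMk hP.not (G.pairing x) hPx')
    exact ⟨_, _, hm.of_restrict_flip hPx' (fun _ => flipPerm_of_closed_not hyx hP hPx) hav⟩

end Melon

end TGraph

namespace TGraph

theorem IsIso.symm {G H : TGraph} (h : IsIso G H) : IsIso H G := by
  obtain ⟨f⟩ := h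
  refine ⟨⟨f.toEquiv.symm, fun v => ?_, fun c v => ?_⟩⟩
  · rw [Equiv.symm_apply_eq, f.map_pairing, Equiv.apply_symm_apply]
  · rw [Equiv.symm_apply_eq, f.map_col, Equiv.apply_symm_apply]

theorem IsIso.of_bijective {G H : TGraph} (f : G.V → H.V) (hf : Function.Bijective f)
    (hp : ∀ v, f (G.pairing v) = H.pairing (f v))
    (hc : ∀ c v, f (G.colPerm c v) = H.colPerm c (f v)) : IsIso G H :=
  ⟨⟨Equiv.ofBijective f hf, hp, hc⟩⟩

/-- The vertices of the bubble of `v`, listed from `v` on. -/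
def nbr (G : TGraph) (v : G.V) (k : Fin 4) : G.V :=
  (v.1, ![v.2, bubblePerm 0 v.2, bubblePerm 1 v.2, bubblePerm 2 v.2] k)

section Nbr

variable (G : TGraph) (v : G.V)

theorem nbr_succ (c : Fin 3) : G.nbr v c.succ = G.colPerm c v := by
  fin_cases c <;> rfl

theorem nbr_bubblePerm (c : Fin 3) (k : Fin 4) :
    G.nbr v (bubblePerm c k) = G.colPerm c (G.nbr v k) := by
  have h : ∀ (c : Fin 3) (a k : Fin 4),
      ![a, bubblePerm 0 a, bubblePerm 1 a, bubblePerm 2 a] (bubblePerm c k) =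
        bubblePerm c (![a, bubblePerm 0 a, bubblePerm 1 a, bubblePerm 2 a] k) := by decide
  exact Prod.ext rfl (h c v.2 k)

theorem nbr_injective : Function.Injective (G.nbr v) := by
  have h : ∀ a k l : Fin 4, ![a, bubblePerm 0 a, bubblePerm 1 a, bubblePerm 2 a] k =
      ![a, bubblePerm 0 a, bubblePerm 1 a, bubblePerm 2 a] l → k = l := by decide
  exact fun k l e => h v.2 k l (congrArg (fun z : G.V => z.2) e)

theorem exists_nbr_eq {v w : G.V} (h : w.1 = v.1) : ∃ k, G.nbr v k = w := by
  rcases G.eq_or_exists_colPerm h with rfl | ⟨c, rfl⟩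
  · exact ⟨0, rfl⟩
  · exact ⟨c.succ, G.nbr_succ v c⟩

end Nbr

section Dipole

variable {G : TGraph} {v w : G.V}

theorem Melon.symm (h : G.Melon v w) : G.Melon w v :=
  ⟨h.1.symm, fun c => G.pairing_eq_iff.2 (h.2 c).symm⟩

theorem Melon.pairing_fst_ne (h : G.Melon v w) (hw : w ≠ G.pairing v) :
    (G.pairing v).1 ≠ v.1 ∧ (G.pairing v).1 ≠ w.1 := by
  constructor
  · intro e
    rcases G.eq_or_exists_colPerm e with e | ⟨c, e⟩
    · exact G.fixfree v e
    · have := h.2 c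
      rw [← e, G.invol] at this
      exact ne_of_fst_ne (b := G.colPerm c w) h.1 this
  · intro e
    rcases G.eq_or_exists_colPerm e with e | ⟨c, e⟩
    · exact hw e.symm
    · rw [← h.2 c] at e
      exact G.colPerm_ne c v (G.pairing.injective e).symm

/-- A dipole without external edges is the whole graph. -/
theorem Melon.b_eq_two (hG : G.Connected) (h : G.Melon v w) (hw : w = G.pairing v) :
    G.b = 2 := by
  rw [connected_iff] at hG
  have key := hG (fun a => a = v.1 ∨ a = w.1) (by
    rintro u (hu | hu)
    · rcases G.eq_or_exists_colPerm hu with rfl | ⟨c, rfl⟩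
      · exact Or.inr (by rw [hw])
      · exact Or.inr (by rw [h.2]; rfl)
    · rcases G.eq_or_exists_colPerm hu with rfl | ⟨c, rfl⟩
      · exact Or.inl (by rw [hw, G.invol])
      · exact Or.inl (by rw [h.symm.2]; rfl)) v.1
  refine Finset.card_eq_two.2 ⟨v.1, w.1, h.1, ?_⟩
  ext a
  simpa using key a (Or.inl rfl)

theorem Melon.bubbleClosed_flip (h : G.Melon v w) (hw : w ≠ G.pairing v) :
    (G.flip v w).BubbleClosed (fun a => a = v.1 ∨ a = w.1) := by
  have hwv : w ≠ v := ne_of_fst_ne h.1.symm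
  have h1 := h.pairing_fst_ne hw
  have h2 := h.symm.pairing_fst_ne (fun e => hw (G.pairing_eq_iff.1 e.symm))
  intro u hu
  change (G.flipPerm v w u).1 = v.1 ∨ (G.flipPerm v w u).1 = w.1
  rcases hu with hu | hu
  · rcases G.eq_or_exists_colPerm (v := v) hu with e | ⟨c, e⟩
    · rw [e, flipPerm_left hwv]
      exact Or.inr rfl
    · rw [e, flipPerm_of_ne (G.colPerm_ne c v) (ne_of_fst_ne h.1) (ne_of_fst_ne h1.1.symm)
        (ne_of_fst_ne h2.2.symm), h.2]
      exact Or.inr rfl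
  · rcases G.eq_or_exists_colPerm (v := w) hu with e | ⟨c, e⟩
    · rw [e, flipPerm_right hwv]
      exact Or.inl rfl
    · rw [e, flipPerm_of_ne (v := G.colPerm c w) (ne_of_fst_ne h.1.symm) (G.colPerm_ne c w)
        (ne_of_fst_ne h1.2.symm) (ne_of_fst_ne h2.1.symm), h.symm.2]
      exact Or.inl rfl

/-- A graph containing a dipole arises from the graph with the dipole removed by inserting it. -/
theorem Melon.isIso_insertDipole (h : G.Melon v w)
    (hP : (G.flip v w).BubbleClosed (fun a => a = v.1 ∨ a = w.1))
    (hv : ¬ ((G.pairing v).1 = v.1 ∨ (G.pairing v).1 = w.1)) :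
    IsIso G (((G.flip v w).restrict _ hP.not).insertDipole
      (restrictMk hP.not (G.pairing v) hv)) := by
  set K := (G.flip v w).restrict _ hP.not with hK
  set p : K.V := restrictMk hP.not (G.pairing v) hv with hp
  have hwv : w ≠ v := ne_of_fst_ne h.1.symm
  let val : K.V → G.V := fun u => restrictVal (G := G.flip v w) hP.not u
  have hval : Function.Injective val := restrictVal_injective hP.not
  have hvalP : ∀ u, ¬ ((val u).1 = v.1 ∨ (val u).1 = w.1) := restrictVal_prop hP.not
  have hpp : val (K.pairing p) = G.pairing w := flipPerm_pairing_left hwv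
  let f : (K.insertDipole p).V → G.V := fun z =>
    match z with
    | (Sum.inl a, k) => val (a, k)
    | (Sum.inr i, k) => G.nbr (![v, w] i) k
  have hfl : ∀ u, f (inlV K G2 u) = val u := fun _ => rfl
  have hfr : ∀ u, f (inrV K G2 u) = G.nbr (![v, w] u.1) u.2 := fun _ => rfl
  refine IsIso.symm (IsIso.of_bijective f ⟨?_, ?_⟩ ?_ ?_)
  · rintro ⟨a | i, k⟩ ⟨a' | i', k'⟩ e
    · have := hval (a₁ := (a, k)) (a₂ := (a', k')) e
      exact congrArg (inlV K G2) this
    · exfalso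
      have e1 : (val (a, k)).1 = (G.nbr (![v, w] i') k').1 :=
        congrArg (fun z : G.V => z.1) (show f (Sum.inl a, k) = f (Sum.inr i', k') from e)
      apply hvalP (a, k)
      fin_cases i'
      · exact Or.inl e1
      · exact Or.inr e1
    · exfalso
      have e1 : (G.nbr (![v, w] i) k).1 = (val (a', k')).1 :=
        congrArg (fun z : G.V => z.1) (show f (Sum.inr i, k) = f (Sum.inl a', k') from e)
      apply hvalP (a', k')
      fin_cases i
      · exact Or.inl e1.symm
      · exact Or.inr e1.symm
    · have e1 : (G.nbr (![v, w] i) k).1 = (G.nbr (![v, w] i') k').1 :=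
        congrArg (fun z : G.V => z.1) (show f (Sum.inr i, k) = f (Sum.inr i', k') from e)
      have hi : i = i' := by
        fin_cases i <;> fin_cases i'
        · rfl
        · exact absurd e1 h.1
        · exact absurd e1.symm h.1
        · rfl
      subst hi
      rw [G.nbr_injective _ e]
  · intro u
    by_cases hu : u.1 = v.1 ∨ u.1 = w.1
    · rcases hu with hu | hu
      · obtain ⟨k, hk⟩ := G.exists_nbr_eq hu
        exact ⟨inrV K G2 ((0 : Fin 2), k), hk⟩
      · obtain ⟨k, hk⟩ := G.exists_nbr_eq hu
        exact ⟨inrV K G2 ((1 : Fin 2), k), hk⟩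
    · exact ⟨inlV K G2 (restrictMk hP.not u hu), rfl⟩
  · rintro ⟨a | i, k⟩
    · change f (glueFun K G2 p ((0 : Fin 2), (0 : Fin 4)) (inlV K G2 (a, k))) =
        G.pairing (val (a, k))
      rw [glueFun_inlV]
      split_ifs with h1 h2
      · rw [h1]
        exact (G.invol v).symm
      · rw [h2, hpp, G.invol]
        rfl
      · rw [hfl]
        refine flipPerm_of_closed_not hwv hP (Or.inl rfl) (hvalP _) (fun e => h1 (hval e))
          (fun e => h2 (hval (e.trans ?_)))
        rfl
    · change f (glueFun K G2 p ((0 : Fin 2), (0 : Fin 4)) (inrV K G2 (i, k))) =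
        G.pairing (G.nbr (![v, w] i) k)
      rw [glueFun_inrV]
      have e0 : G2.pairing ((0 : Fin 2), (0 : Fin 4)) = ((1 : Fin 2), (0 : Fin 4)) := rfl
      rw [e0]
      split_ifs with h1 h2
      · cases h1
        rfl
      · cases h2
        exact hpp
      · rw [hfr]
        have hk : k ≠ 0 := by
          rintro rfl
          fin_cases i
          · exact h1 rfl
          · exact h2 rfl
        obtain ⟨c, rfl⟩ := Fin.exists_succ_eq.2 hk
        rw [nbr_succ]
        fin_cases i
        · exact (G.nbr_succ w c).trans (h.2 c).symm
        · exact (G.nbr_succ v c).trans (h.symm.2 c).symm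
  · rintro c ⟨a | i, k⟩
    · rfl
    · exact G.nbr_bubblePerm _ c k

theorem restrict_b_of_pair {a₁ a₂ : G.B} (h : a₁ ≠ a₂)
    (hP : G.BubbleClosed (fun a => a = a₁ ∨ a = a₂)) : (G.restrict _ hP).b = 2 := by
  unfold b
  rw [← Nat.card_eq_fintype_card]
  exact Set.ncard_pair h

/-- A connected graph with one bubble is a double tadpole. -/
theorem isIso_G1_of_b_eq_one (hb : G.b = 1) : ∃ c, IsIso G (G1 c) := by
  obtain ⟨a, ha⟩ := Fintype.card_eq_one_iff.1 hb
  have hcol : ∀ v : G.V, ∃ c, G.pairing v = G.colPerm c v := fun v =>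
    (G.eq_or_exists_colPerm ((ha _).trans (ha _).symm)).resolve_left (G.fixfree v)
  obtain ⟨c, hc⟩ := hcol (a, 0)
  have hall : ∀ v, G.pairing v = G.colPerm c v := by
    intro v
    rcases G.eq_or_exists_colPerm (v := (a, 0)) (ha v.1) with rfl | ⟨d, rfl⟩
    · exact hc
    by_cases hdc : d = c
    · rw [hdc, G.colPerm_colPerm, ← hc, G.invol]
    obtain ⟨f, hf⟩ := hcol (G.colPerm d (a, 0))
    by_cases hfd : f = d
    · rw [hfd, G.colPerm_colPerm, G.pairing_eq_iff, hc] at hf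
      exact absurd hf (G.colPerm_ne_colPerm hdc _)
    by_cases hfc : f = c
    · rw [hf, hfc]
    rw [G.colPerm_colPerm_of_ne hfd hfc hdc, ← hc] at hf
    exact absurd (G.pairing.injective hf) (G.colPerm_ne _ _)
  refine ⟨c, IsIso.of_bijective (fun v => ((0 : Fin 1), v.2)) ⟨?_, ?_⟩ ?_ ?_⟩
  · intro v w h
    exact Prod.ext ((ha _).trans (ha _).symm) (congrArg (fun z : (G1 c).V => z.2) h)
  · rintro ⟨i, k⟩
    exact ⟨(a, k), Prod.ext (Subsingleton.elim (α := Fin 1) _ _) rfl⟩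
  · intro v
    rw [hall]
    rfl
  · intro d v
    rfl

/-- A connected graph with an odd number of bubbles and enough faces is a decorated double
tadpole. -/
theorem isDecoratedTadpole_of_le (hG : G.Connected) (hodd : Odd G.b)
    (hF : 3 * G.b + 5 ≤ 2 * G.F) : IsDecoratedTadpole G := by
  induction hn : G.b using Nat.strong_induction_on generalizing G with
  | _ n ih =>
  subst hn
  by_cases hb : G.b = 1
  · obtain ⟨c, hc⟩ := isIso_G1_of_b_eq_one hb
    exact .base c hc
  obtain ⟨a⟩ : Nonempty G.B := Fintype.card_pos_iff.1 hodd.pos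
  obtain ⟨v, w, h⟩ := exists_melon hG hF hb (a, 0)
  by_cases hw : w = G.pairing v
  · rw [h.b_eq_two hG hw] at hodd
    exact absurd hodd (by decide)
  have hP := h.bubbleClosed_flip hw
  have hv := not_or.2 (h.pairing_fst_ne hw)
  obtain ⟨hH, hK, hFHK⟩ := cut_properties hG (ne_of_fst_ne h.1.symm) hw hP (Or.inl rfl) hv
  have hbH := restrict_b_of_pair (G := G.flip v w) h.1 hP
  have hadd := restrict_b_add hP
  have hFH := two_mul_F_le hH
  rw [hbH, flip_b] at hadd
  rw [hbH] at hFH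
  refine .insert (ih _ ?_ hK ?_ ?_ rfl) _ (h.isIso_insertDipole hP hv)
  · omega
  · rw [← hadd, Nat.odd_add'] at hodd
    exact hodd.2 (by decide)
  · omega

end Dipole

end TGraph

namespace TGraph

section IsoInvariance

variable {G H : TGraph}

theorem IsIso.b_eq (h : IsIso G H) : G.b = H.b := by
  obtain ⟨f⟩ := h
  have := Fintype.card_congr f.toEquiv
  rw [card_V, card_V] at this
  omega

theorem IsIso.numFaces_le (h : IsIso G H) (c : Fin 3) : H.numFaces c ≤ G.numFaces c := by
  obtain ⟨f⟩ := h
  rw [numFaces_eq_orbitRank, numFaces_eq_orbitRank]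
  let φ : ↥(invariants H.pairing ⊓ invariants (H.colPerm c)) →ₗ[ZMod 2]
      ↥(invariants G.pairing ⊓ invariants (G.colPerm c)) :=
    { toFun := fun g => ⟨fun v => g.1 (f.toEquiv v),
        fun v => (congrArg g.1 (f.map_pairing v)).trans (g.2.1 _),
        fun v => (congrArg g.1 (f.map_col c v)).trans (g.2.2 _)⟩
      map_add' := fun _ _ => rfl
      map_smul' := fun _ _ => rfl }
  refine LinearMap.finrank_le_finrank_of_injective (f := φ) fun g g' e => ?_
  ext v
  have := congrFun (congrArg Subtype.val e) (f.toEquiv.symm v)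
  simpa [φ] using this

theorem IsIso.F_le (h : IsIso G H) : H.F ≤ G.F :=
  Finset.sum_le_sum fun c _ => h.numFaces_le c

theorem IsIso.connected (h : IsIso G H) (hG : G.Connected) : H.Connected := by
  obtain ⟨f⟩ := h
  rw [connected_iff] at hG ⊢
  intro P hP a b ha
  have hfst : ∀ v : G.V, (f.toEquiv (v.1, 0)).1 = (f.toEquiv v).1 := by
    intro v
    rcases G.eq_or_exists_colPerm (v := v) (w := (v.1, 0)) rfl with e | ⟨c, e⟩
    · rw [e]
    · rw [e, f.map_col]; rfl
  have key := hG (fun a => P (f.toEquiv (a, 0)).1) (fun v hv => by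
    change P (f.toEquiv ((G.pairing v).1, 0)).1
    rw [hfst, f.map_pairing]
    apply hP
    rw [← hfst]
    exact hv) (f.toEquiv.symm (a, 0)).1 (f.toEquiv.symm (b, 0)).1
  change P (f.toEquiv (_, 0)).1 → P (f.toEquiv (_, 0)).1 at key
  rw [hfst, hfst, Equiv.apply_symm_apply, Equiv.apply_symm_apply] at key
  exact key ha

end IsoInvariance

section InsertDipole

variable (G : TGraph) (v : G.V)

theorem insertDipole_b : (G.insertDipole v).b = G.b + 2 := by
  unfold b
  exact Fintype.card_sum (α := G.B) (β := Fin 2)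

theorem insertDipole_connected (hG : G.Connected) : (G.insertDipole v).Connected := by
  rw [connected_iff] at hG ⊢
  intro P hP
  have hiff : ∀ z : (G.insertDipole v).V, P z.1 ↔ P ((G.insertDipole v).pairing z).1 := by
    refine fun z => ⟨hP z, fun h => ?_⟩
    have := hP _ h
    rwa [TGraph.invol] at this
  have hl : ∀ u : G.V, P (Sum.inl u.1) ↔
      P (glueFun G G2 v ((0 : Fin 2), (0 : Fin 4)) (inlV G G2 u)).1 :=
    fun u => hiff (inlV G G2 u)
  have hr : ∀ u : G2.V, P (Sum.inr u.1) ↔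
      P (glueFun G G2 v ((0 : Fin 2), (0 : Fin 4)) (inrV G G2 u)).1 :=
    fun u => hiff (inrV G G2 u)
  have h0 : P (Sum.inr (0 : Fin 2)) ↔ P (Sum.inl v.1) := by
    have := hr ((0 : Fin 2), (0 : Fin 4))
    rwa [glueFun_inrV, if_pos rfl] at this
  have h1 : P (Sum.inr (1 : Fin 2)) ↔ P (Sum.inl (G.pairing v).1) := by
    have := hl (G.pairing v)
    rw [glueFun_inlV, if_neg (G.fixfree v), if_pos rfl] at this
    exact this.symm
  have h01 : P (Sum.inr (0 : Fin 2)) ↔ P (Sum.inr (1 : Fin 2)) :=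
    hr ((0 : Fin 2), (1 : Fin 4))
  have hcl : G.BubbleClosed (fun a => P (Sum.inl a)) := by
    intro u hu
    by_cases hu1 : u = v
    · rw [hu1, ← h1, ← h01, h0, ← hu1]
      exact hu
    by_cases hu2 : u = G.pairing v
    · rw [hu2, G.invol, ← h0, h01, h1, ← hu2]
      exact hu
    have := (hl u).1 hu
    rwa [glueFun_inlV, if_neg hu1, if_neg hu2] at this
  have hall : ∀ z, P z ↔ P (Sum.inl v.1) := by
    rintro (a | i)
    · exact ⟨hG _ hcl a v.1, hG _ hcl v.1 a⟩
    · have hi : i = (0 : Fin 2) ∨ i = (1 : Fin 2) := by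
        have : ∀ j : Fin 2, j = 0 ∨ j = 1 := by decide
        exact this i
      rcases hi with rfl | rfl
      · exact h0
      · exact h01.symm.trans h0
  exact fun a b h => (hall b).2 ((hall a).1 h)

theorem numFaces_add_one_le_insertDipole (c : Fin 3) :
    G.numFaces c + 1 ≤ (G.insertDipole v).numFaces c := by
  rw [numFaces_eq_orbitRank, numFaces_eq_orbitRank]
  let ext : (G.V → ZMod 2) → ZMod 2 → (G.insertDipole v).V → ZMod 2 := fun f t z =>
    match z with
    | (Sum.inl a, k) => f (a, k)
    | (Sum.inr _, k) => f v + if k = 0 ∨ k = c.succ then 0 else t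
  let φ : (↥(invariants G.pairing ⊓ invariants (G.colPerm c)) × ZMod 2) →ₗ[ZMod 2]
      ↥(invariants (G.insertDipole v).pairing ⊓ invariants ((G.insertDipole v).colPerm c)) :=
    { toFun := fun g => ⟨ext g.1.1 g.2, by
        obtain ⟨⟨f, hf0, hfc⟩, t⟩ := g
        constructor
        · rintro ⟨a | i, k⟩
          · change ext f t (glueFun G G2 v ((0 : Fin 2), (0 : Fin 4)) (inlV G G2 (a, k))) =
              f (a, k)
            rw [glueFun_inlV]
            split_ifs with h1 h2
            · rw [h1]
              exact add_zero _
            · rw [h2, hf0]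
              exact add_zero _
            · exact hf0 (a, k)
          · change ext f t (glueFun G G2 v ((0 : Fin 2), (0 : Fin 4)) (inrV G G2 (i, k))) =
              f v + if k = 0 ∨ k = c.succ then 0 else t
            rw [glueFun_inrV]
            split_ifs with h1 h2 h2 h3 h3
            · exact (add_zero (f v)).symm
            · cases h1
              exact absurd (Or.inl rfl) h2
            · exact (hf0 v).trans (add_zero _).symm
            · cases h2
              exact absurd (Or.inl rfl) h3
            · exact congrArg (f v + ·) (if_pos h3)
            · exact congrArg (f v + ·) (if_neg h3)
        · rintro ⟨a | i, k⟩
          · exact hfc (a, k)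
          · have h : ∀ (c : Fin 3) (k : Fin 4),
                (bubblePerm c k = 0 ∨ bubblePerm c k = c.succ) ↔ (k = 0 ∨ k = c.succ) := by
              decide
            exact congrArg (f v + ·) (if_congr (h c k) rfl rfl)⟩
      map_add' := fun g g' => by
        ext ⟨a | i, k⟩
        · rfl
        · change (g.1.1 v + g'.1.1 v) + (if k = 0 ∨ k = c.succ then 0 else g.2 + g'.2) =
            (g.1.1 v + if k = 0 ∨ k = c.succ then 0 else g.2) +
              (g'.1.1 v + if k = 0 ∨ k = c.succ then 0 else g'.2)
          split_ifs <;> ring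
      map_smul' := fun r g => by
        ext ⟨a | i, k⟩
        · rfl
        · change r * g.1.1 v + (if k = 0 ∨ k = c.succ then 0 else r * g.2) =
            r * (g.1.1 v + if k = 0 ∨ k = c.succ then 0 else g.2)
          split_ifs <;> ring }
  have hinj : Function.Injective φ := by
    intro g g' e
    have h1 : g.1 = g'.1 := by
      ext u
      exact congrFun (congrArg Subtype.val e) (inlV G G2 u)
    refine Prod.ext h1 ?_
    obtain ⟨k, hk⟩ : ∃ k : Fin 4, ¬ (k = 0 ∨ k = c.succ) := by clear * -; revert c; decide
    have h2 : (g.1.1 v + if k = 0 ∨ k = c.succ then 0 else g.2) =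
        g'.1.1 v + if k = 0 ∨ k = c.succ then 0 else g'.2 :=
      congrFun (congrArg Subtype.val e) (inrV G G2 ((0 : Fin 2), k))
    rw [if_neg hk, if_neg hk, h1] at h2
    exact add_left_cancel h2
  have := LinearMap.finrank_le_finrank_of_injective hinj
  rwa [Module.finrank_prod, Module.finrank_self] at this

end InsertDipole

theorem G1_connected (c : Fin 3) : (G1 c).Connected := by
  rw [connected_iff]
  intro P _ a b h
  rwa [Subsingleton.elim (α := Fin 1) b a]

theorem four_le_G1_F (c : Fin 3) : 4 ≤ (G1 c).F := by
  obtain ⟨d, e, hcd, hce, hde⟩ : ∃ d e, c ≠ d ∧ c ≠ e ∧ d ≠ e := by revert c; decide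
  have h1 : ∀ d, 1 ≤ (G1 c).numFaces d := fun d => by
    rw [numFaces_eq_orbitRank]
    exact (G1 c).le_orbitRank_colPerm (c := c) (d := d)
  have h2 : 2 ≤ (G1 c).numFaces c := by
    rw [numFaces_eq_orbitRank]
    have hk : ∀ (c : Fin 3) (k : Fin 4),
        (bubblePerm c k = 0 ∨ bubblePerm c k = c.succ) ↔ (k = 0 ∨ k = c.succ) := by decide
    let φ : (ZMod 2 × ZMod 2) →ₗ[ZMod 2]
        ↥(invariants (G1 c).pairing ⊓ invariants ((G1 c).colPerm c)) :=
      { toFun := fun s => ⟨fun v => if v.2 = 0 ∨ v.2 = c.succ then s.1 else s.2,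
          fun v => if_congr (hk c v.2) rfl rfl, fun v => if_congr (hk c v.2) rfl rfl⟩
        map_add' := fun s t => by
          ext v
          change (if v.2 = 0 ∨ v.2 = c.succ then s.1 + t.1 else s.2 + t.2) =
            (if v.2 = 0 ∨ v.2 = c.succ then s.1 else s.2) +
              if v.2 = 0 ∨ v.2 = c.succ then t.1 else t.2
          split_ifs <;> rfl
        map_smul' := fun r s => by
          ext v
          exact (apply_ite (r * ·) _ _ _).symm }
    have hinj : Function.Injective φ := by
      intro s t e
      obtain ⟨k, hk⟩ : ∃ k : Fin 4, ¬ (k = 0 ∨ k = c.succ) := by clear * -; revert c; decide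
      have e0 : (if (0 : Fin 4) = 0 ∨ (0 : Fin 4) = c.succ then s.1 else s.2) =
          if (0 : Fin 4) = 0 ∨ (0 : Fin 4) = c.succ then t.1 else t.2 :=
        congrFun (congrArg Subtype.val e) ((0 : Fin 1), (0 : Fin 4))
      have ek : (if k = 0 ∨ k = c.succ then s.1 else s.2) =
          if k = 0 ∨ k = c.succ then t.1 else t.2 :=
        congrFun (congrArg Subtype.val e) ((0 : Fin 1), k)
      rw [if_pos (Or.inl rfl), if_pos (Or.inl rfl)] at e0
      rw [if_neg hk, if_neg hk] at ek
      exact Prod.ext e0 ek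
    have := LinearMap.finrank_le_finrank_of_injective hinj
    rwa [Module.finrank_prod, Module.finrank_self] at this
  have hd := h1 d
  have he := h1 e
  rw [F_eq_of_ne _ hcd hce hde]
  omega

theorem connected_and_le_of_isDecoratedTadpole {G : TGraph} (h : IsDecoratedTadpole G) :
    G.Connected ∧ 3 * G.b + 5 ≤ 2 * G.F := by
  induction h with
  | base c h =>
    have hF := (four_le_G1_F c).trans h.F_le
    have hb : (G1 c).b = 1 := rfl
    refine ⟨h.symm.connected (G1_connected c), ?_⟩
    rw [h.b_eq, hb]
    omega
  | @insert G _ v H h ih =>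
    have hF := h.F_le
    have hf := G.numFaces_add_one_le_insertDipole v
    have h0 := hf 0
    have h1 := hf 1
    have h2 := hf 2
    have ihF := ih.2
    refine ⟨h.symm.connected (G.insertDipole_connected v ih.1), ?_⟩
    rw [h.b_eq, insertDipole_b]
    rw [F_eq] at hF ihF
    omega

theorem exists_isDecoratedTadpole (n : ℕ) : ∃ G, IsDecoratedTadpole G ∧ G.b = 2 * n + 1 := by
  induction n with
  | zero => exact ⟨G1 0, .base 0 ⟨⟨Equiv.refl _, fun _ => rfl, fun _ _ => rfl⟩⟩, rfl⟩
  | succ n ih =>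
    obtain ⟨G, hG, hb⟩ := ih
    obtain ⟨a⟩ : Nonempty G.B := Fintype.card_pos_iff.1 (by
      change 0 < G.b
      omega)
    refine ⟨G.insertDipole (a, 0), .insert hG (a, 0)
      ⟨⟨Equiv.refl _, fun _ => rfl, fun _ _ => rfl⟩⟩, ?_⟩
    rw [insertDipole_b]
    omega

end TGraph

/-- Among connected graphs of the tetrahedral model with an odd
number `b` of bubbles, the graphs maximizing the number of faces are exactly
the double tadpoles decorated with melonic 2-point functions, and they
satisfy `F(G) = (3/2)(b - 1) + 4 = (3/2) b + 5/2`. -/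
theorem odd_maximizers_tadpole (G : TGraph) (hG : G.Connected)
    (hodd : Odd G.b) :
    (G.MaximizesFaces ↔ IsDecoratedTadpole G) ∧
      (G.MaximizesFaces →
        (G.F : ℚ) = 3 / 2 * ((G.b : ℚ) - 1) + 4 ∧
          (G.F : ℚ) = 3 / 2 * G.b + 5 / 2) := by
  have hmax : G.MaximizesFaces → 3 * G.b + 5 ≤ 2 * G.F := by
    intro hmax
    obtain ⟨n, hn⟩ := hodd
    obtain ⟨H, hH, hHb⟩ := exists_isDecoratedTadpole n
    obtain ⟨hHc, hHF⟩ := connected_and_le_of_isDecoratedTadpole hH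
    have := hmax.2 H hHc (hHb.trans hn.symm)
    omega
  have hup : ∀ H : TGraph, H.Connected → H.b = G.b → 2 * H.F ≤ 3 * G.b + 5 := by
    intro H hH hb
    have := two_mul_F_le hH
    obtain ⟨n, hn⟩ := hodd
    omega
  refine ⟨⟨fun h => isDecoratedTadpole_of_le hG hodd (hmax h), fun h => ⟨hG, fun H hH hb => ?_⟩⟩,
    fun h => ?_⟩
  · have h1 := (connected_and_le_of_isDecoratedTadpole h).2
    have h2 := hup H hH hb
    omega
  · have hF : 2 * G.F = 3 * G.b + 5 := le_antisymm (hup G hG rfl) (hmax h)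
    have hq : (2 : ℚ) * G.F = 3 * G.b + 5 := by exact_mod_cast hF
    constructor <;> linarith
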